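/- Let p be a prime and n ≥ 1. Let M be an analytic submanifold of ℚ_p^n. If some point y₀ ∈ M is not very well approximable (i.e., w(y₀) = n+1), then the set of not very well approximable points of M has positive measure with respect to the smooth measure class on M. -/

import Mathlib

open MeasureTheory Metric
open scoped ENNReal NNReal

namespace PadicDioph

variable (p : ℕ) [Fact p.Prime]

noncomputable instance : MeasurableSpace ℚ_[p] := borel _
instance : BorelSpace ℚ_[p] := ⟨rfl⟩

/-- Membership in `ℤ[1/p]`, viewed inside `ℚ`. -/
def IsZInvP (q : ℚ) : Prop := ∃ (z : ℤ) (k : ℕ), q = (z : ℚ) / (p : ℚ) ^ k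

/-- Sup norm (max of archimedean absolute values) of a finite tuple of rationals. -/
noncomputable def supNormR {m : ℕ} (q : Fin m → ℚ) : ℝ := ⨆ i, |(q i : ℝ)|

/-- Sup of the `p`-adic absolute values of a finite tuple of rationals. -/
noncomputable def supNormP {m : ℕ} (q : Fin m → ℚ) : ℝ := ⨆ i, ‖((q i : ℚ_[p]))‖

/-- Sup norm of an integer tuple together with an extra integer coordinate. -/
noncomputable def supNormZ {n : ℕ} (q0 : ℤ) (q : Fin n → ℤ) : ℝ :=
  max |(q0 : ℝ)| (⨆ i, |((q i : ℤ) : ℝ)|)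

/-- The classical Diophantine exponent `w(y)` of `y ∈ ℚ_p^n`: the supremum of all `v > 0`
such that `|q₀ + q·y|_p ≤ ‖(q₀,q)‖_∞^{-v}` has infinitely many integer solutions. -/
noncomputable def wExp {n : ℕ} (y : Fin n → ℚ_[p]) : ℝ≥0∞ :=
  ⨆ (v : ℝ) (_ : 0 < v ∧
    {qq : ℤ × (Fin n → ℤ) |
      ‖((qq.1 : ℚ_[p]) + ∑ i, (qq.2 i : ℚ_[p]) * y i)‖ ≤
        (supNormZ qq.1 qq.2) ^ (-v)}.Infinite), ENNReal.ofReal v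

/-- `y` is very well approximable if `w(y) > n + 1`. -/
def IsVWA {n : ℕ} (y : Fin n → ℚ_[p]) : Prop :=
  ENNReal.ofReal ((n : ℝ) + 1) < wExp p y

/-- The defining condition of the exponent `w_p`: there are solutions
`q̃ = (q₀, q) ∈ ℤ[1/p]^{n+1}` of `|q·y + q₀|_p < (‖q‖_p ‖q̃‖_∞)^{-v} ‖q̃‖_∞^{-1}`
with `‖q‖_p ‖q̃‖_∞` arbitrarily large. -/
def WpCond {n : ℕ} (y : Fin n → ℚ_[p]) (v : ℝ) : Prop :=
  ∀ T : ℝ, ∃ (q0 : ℚ) (q : Fin n → ℚ),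
    IsZInvP p q0 ∧ (∀ i, IsZInvP p (q i)) ∧
    T < supNormP p q * supNormR (Fin.cons q0 q) ∧
    ‖(∑ i, (q i : ℚ_[p]) * y i) + (q0 : ℚ_[p])‖ <
      (supNormP p q * supNormR (Fin.cons q0 q)) ^ (-v) * (supNormR (Fin.cons q0 q))⁻¹

/-- The exponent `w_p(y)`. -/
noncomputable def wpExp {n : ℕ} (y : Fin n → ℚ_[p]) : ℝ≥0∞ :=
  ⨆ (v : ℝ) (_ : 0 < v ∧ WpCond p y v), ENNReal.ofReal v

/-- `Π_+` of a tuple of rationals: the product of `|q_i|_∞` over the nonzero coordinates. -/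
noncomputable def piPlusQ {m : ℕ} (q : Fin m → ℚ) : ℝ :=
  ∏ i, (if q i = 0 then 1 else |(q i : ℝ)|)

/-- `Π_+` of `(q₀, q)` with integer coordinates. -/
noncomputable def piPlusZ {n : ℕ} (q0 : ℤ) (q : Fin n → ℤ) : ℝ :=
  (if q0 = 0 then 1 else |(q0 : ℝ)|) * ∏ i, (if q i = 0 then 1 else |((q i : ℤ) : ℝ)|)

/-- `y ∈ ℚ_p^n` is very well multiplicatively approximable. -/
def IsVWMA {n : ℕ} (y : Fin n → ℚ_[p]) : Prop :=
  ∃ ε : ℝ, 0 < ε ∧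
    {qq : ℤ × (Fin n → ℤ) |
      ‖((qq.1 : ℚ_[p]) + ∑ i, (qq.2 i : ℚ_[p]) * y i)‖ ≤
        (piPlusZ qq.1 qq.2) ^ (-(1 + ε))}.Infinite

/-- A measure on `ℚ_p^n` is strongly extremal if almost every point is not VWMA. -/
def StronglyExtremal {n : ℕ} (μ : Measure (Fin n → ℚ_[p])) : Prop :=
  ∀ᵐ y ∂μ, ¬ IsVWMA p y

/-- `δ(g_t u_y D^{n+1})` for the one-parameter flow: `g_t` has `p`-adic component
`diag(p^{-t},1,…,1)` and archimedean component `p^{-t/(n+1)}·Id`. -/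
noncomputable def deltaOne {n : ℕ} (y : Fin n → ℚ_[p]) (t : ℕ) : ℝ :=
  sInf { c : ℝ | ∃ qt : Fin (n + 1) → ℚ, (∀ i, IsZInvP p (qt i)) ∧ qt ≠ 0 ∧
    c = ((p : ℝ) ^ (-(t : ℝ) / ((n : ℝ) + 1)) * supNormR qt) *
        max (‖(((p : ℚ_[p]) ^ t)⁻¹ * ((qt 0 : ℚ_[p]) + ∑ i : Fin n, (qt i.succ : ℚ_[p]) * y i))‖)
            (⨆ i : Fin n, ‖((qt i.succ : ℚ_[p]))‖) }

/-- The exponent `γ(y)`. -/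
noncomputable def gammaExp {n : ℕ} (y : Fin n → ℚ_[p]) : ℝ :=
  sSup {c : ℝ | 0 ≤ c ∧ ∀ N : ℕ, ∃ t : ℕ, N ≤ t ∧
    deltaOne p y t ≤ (p : ℝ) ^ (-(c * (t : ℝ)))}

/-- `δ(g_t u_y D^{n+1})` for the multiparameter flow: for `t = (t₀,…,t_n)` with
`T = Σ tᵢ`, the `p`-adic component of `g_t` is `diag(p^{-T},1,…,1)` and the archimedean
component is `diag(p^{-t₀},…,p^{-t_n})`. -/
noncomputable def deltaMulti {n : ℕ} (y : Fin n → ℚ_[p]) (t : Fin (n + 1) → ℕ) : ℝ :=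
  sInf { c : ℝ | ∃ qt : Fin (n + 1) → ℚ, (∀ i, IsZInvP p (qt i)) ∧ qt ≠ 0 ∧
    c = (⨆ i, (p : ℝ) ^ (-((t i : ℝ))) * |(qt i : ℝ)|) *
        max (‖(((p : ℚ_[p]) ^ (∑ i, t i))⁻¹ *
              ((qt 0 : ℚ_[p]) + ∑ i : Fin n, (qt i.succ : ℚ_[p]) * y i))‖)
            (⨆ i : Fin n, ‖((qt i.succ : ℚ_[p]))‖) }

/-- The support of a measure on a metric space. -/
def measSupp {X : Type*} [MetricSpace X] [MeasurableSpace X] (μ : Measure X) : Set X :=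
  {x | ∀ r : ℝ, 0 < r → 0 < μ (ball x r)}

/-- `‖f‖_{μ,B}`. -/
noncomputable def muSupNorm {X : Type*} [MetricSpace X] [MeasurableSpace X]
    (μ : Measure X) (B : Set X) (f : X → ℚ_[p]) : ℝ :=
  sSup {c : ℝ | 0 < μ {x ∈ B | c < ‖f x‖}}

/-- `f` is `(C, α)`-good on `V` with respect to `μ`. -/
def IsGoodOn {X : Type*} [MetricSpace X] [MeasurableSpace X] (μ : Measure X)
    (C a : ℝ) (V : Set X) (f : X → ℚ_[p]) : Prop :=
  ∀ (x₀ : X) (r : ℝ), 0 < r → x₀ ∈ measSupp μ → ball x₀ r ⊆ V →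
    ∀ ε : ℝ, 0 < ε →
      μ {x ∈ ball x₀ r | ‖f x‖ < ε} ≤
        ENNReal.ofReal (C * (ε / muSupNorm p μ (ball x₀ r) f) ^ a) * μ (ball x₀ r)

/-- A metric space is Besicovitch: any family of balls whose centers exhaust a bounded
set `A` admits a countable subfamily covering `A` with multiplicity at most `N`. -/
def IsBesicovitch (X : Type*) [MetricSpace X] : Prop :=
  ∃ N : ℕ, ∀ (A : Set X), Bornology.IsBounded A →
    ∀ F : Set (X × ℝ), (∀ b ∈ F, 0 < b.2) → (∀ x ∈ A, ∃ r : ℝ, (x, r) ∈ F) →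
      ∃ S ⊆ F, S.Countable ∧ (∀ x ∈ A, ∃ b ∈ S, x ∈ ball b.1 b.2) ∧
        ∀ x : X, {b ∈ S | x ∈ ball b.1 b.2}.encard ≤ N

/-- `μ` is `D`-Federer on the open set `U`. -/
def IsDFedererOn {X : Type*} [MetricSpace X] [MeasurableSpace X]
    (μ : Measure X) (D : ℝ) (U : Set X) : Prop :=
  ∀ x ∈ measSupp μ, ∀ r : ℝ, 0 < r → ball x (3 * r) ⊆ U →
    μ (ball x (3 * r)) ≤ ENNReal.ofReal D * μ (ball x r)

/-- `μ` is Federer. -/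
def IsFederer {X : Type*} [MetricSpace X] [MeasurableSpace X] (μ : Measure X) : Prop :=
  ∀ᵐ x ∂μ, ∃ U : Set X, IsOpen U ∧ x ∈ U ∧ 0 < μ U ∧ ∃ D : ℝ, 0 < D ∧ IsDFedererOn μ D U

/-- The pair `(f, μ)` is good: `μ`-a.e. point has a neighbourhood `V` and `C, α > 0`
such that every affine combination `c₀ + Σ cᵢ fᵢ` is `(C, α)`-good on `V` w.r.t. `μ`. -/
def GoodPair {X : Type*} [MetricSpace X] [MeasurableSpace X] {n : ℕ}
    (f : X → (Fin n → ℚ_[p])) (μ : Measure X) : Prop :=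
  ∀ᵐ x ∂μ, ∃ V : Set X, IsOpen V ∧ x ∈ V ∧ ∃ C a : ℝ, 0 < C ∧ 0 < a ∧
    ∀ c0 : ℚ_[p], ∀ c : Fin n → ℚ_[p],
      IsGoodOn p μ C a V (fun x => c0 + ∑ i, c i * f x i)

/-- `(f, μ)` is nonplanar in the affine subspace `L`. -/
def NonplanarIn {X : Type*} [MetricSpace X] [MeasurableSpace X] {n : ℕ}
    (f : X → (Fin n → ℚ_[p])) (μ : Measure X)
    (L : AffineSubspace ℚ_[p] (Fin n → ℚ_[p])) : Prop :=
  ∀ B : Set X, IsOpen B → B.Nonempty → 0 < μ B →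
    affineSpan ℚ_[p] (f '' (B ∩ measSupp μ)) = L

/-- `f` is nondegenerate in the affine subspace `L` at `x`: `f` takes values in `L` and the
span of the partial derivatives of `f` at `x` up to some order is the linear part of `L`. -/
def NondegenerateAt {d n : ℕ} (f : (Fin d → ℚ_[p]) → (Fin n → ℚ_[p]))
    (L : AffineSubspace ℚ_[p] (Fin n → ℚ_[p])) (x : Fin d → ℚ_[p]) : Prop :=
  (∀ u, f u ∈ L) ∧ ∃ m : ℕ,
    Submodule.span ℚ_[p]
      {v : Fin n → ℚ_[p] | ∃ j : ℕ, j ≤ m ∧ 1 ≤ j ∧ ∃ vs : Fin j → (Fin d → ℚ_[p]),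
        v = iteratedFDeriv ℚ_[p] j f x vs} = L.direction

/-- An analytic chart of the `d`-dimensional submanifold `M` of `ℚ_p^n`: an analytic map
`f` on an open set `U`, injective on `U`, immersive, a homeomorphism onto its image, whose
image is a relatively open subset of `M`. -/
def IsChart (d n : ℕ) (M : Set (Fin n → ℚ_[p]))
    (U : Set (Fin d → ℚ_[p])) (f : (Fin d → ℚ_[p]) → (Fin n → ℚ_[p])) : Prop :=
  IsOpen U ∧ AnalyticOnNhd ℚ_[p] f U ∧ Set.InjOn f U ∧
  (∀ x ∈ U, Function.Injective (fderiv ℚ_[p] f x)) ∧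
  (∀ x ∈ U, ∀ V : Set (Fin d → ℚ_[p]), IsOpen V → x ∈ V →
      ∃ W : Set (Fin n → ℚ_[p]), IsOpen W ∧ f x ∈ W ∧ W ∩ f '' U ⊆ f '' (V ∩ U)) ∧
  ∃ W : Set (Fin n → ℚ_[p]), IsOpen W ∧ M ∩ W = f '' U

/-- `M` is a `d`-dimensional analytic submanifold of `ℚ_p^n`. -/
def IsAnalyticSubmanifold (d n : ℕ) (M : Set (Fin n → ℚ_[p])) : Prop :=
  M.Nonempty ∧ ∀ y ∈ M, ∃ (U : Set (Fin d → ℚ_[p])) (f : (Fin d → ℚ_[p]) → (Fin n → ℚ_[p])),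
    IsChart p d n M U f ∧ y ∈ f '' U



section

/-- closed ball of level `m` -/
noncomputable def bl (a : ℚ_[p]) (m : ℕ) : Set ℚ_[p] := closedBall a ((p : ℝ) ^ (-(m : ℤ)))

lemma mem_bl {a x : ℚ_[p]} {m : ℕ} : x ∈ bl p a m ↔ ‖x - a‖ ≤ (p : ℝ) ^ (-(m : ℤ)) := by
  rw [bl, mem_closedBall, dist_eq_norm]

lemma p_pos_real : (0 : ℝ) < p := by exact_mod_cast (Fact.out : p.Prime).pos

lemma one_lt_p_real : (1 : ℝ) < p := by exact_mod_cast (Fact.out : p.Prime).one_lt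

lemma bl_mem_self (a : ℚ_[p]) (m : ℕ) : a ∈ bl p a m := by
  rw [mem_bl]; simp

lemma bl_eq_of_mem {a x : ℚ_[p]} {m : ℕ} (h : x ∈ bl p a m) : bl p x m = bl p a m :=
  IsUltrametricDist.closedBall_eq_of_mem h |>.symm

lemma bl_sub {a b : ℚ_[p]} {m s : ℕ} (h : b ∈ bl p a m) : bl p b (m + s) ⊆ bl p a m := by
  rw [← bl_eq_of_mem p h]
  apply closedBall_subset_closedBall
  apply zpow_le_zpow_right₀ (one_lt_p_real p).le
  push_cast; omega

lemma bl_cover (a : ℚ_[p]) (m : ℕ) {x : ℚ_[p]} (hx : x ∈ bl p a m) :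
    ∃ i ∈ Finset.range p, x ∈ bl p (a + (p : ℚ_[p]) ^ m * (i : ℚ_[p])) (m + 1) := by
  rw [mem_bl] at hx
  have hp0 : (p : ℚ_[p]) ≠ 0 := by exact_mod_cast (Fact.out : p.Prime).ne_zero
  have hz : ‖(x - a) / (p : ℚ_[p]) ^ m‖ ≤ 1 := by
    rw [norm_div, norm_pow, Padic.norm_p]
    rw [div_le_one (by have := p_pos_real p; positivity)]
    simpa using hx
  set z : ℤ_[p] := ⟨_, hz⟩ with hzd
  refine ⟨z.appr 1, by simpa using z.appr_lt 1, ?_⟩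
  have h := PadicInt.appr_spec 1 z
  rw [← PadicInt.norm_le_pow_iff_mem_span_pow] at h
  rw [mem_bl]
  have e : x - (a + (p : ℚ_[p]) ^ m * ((z.appr 1 : ℕ) : ℚ_[p]))
      = (p : ℚ_[p]) ^ m * ((z - (z.appr 1 : ℕ) : ℤ_[p]) : ℚ_[p]) := by
    push_cast
    rw [hzd]
    field_simp
    ring
  rw [e, norm_mul, norm_pow, Padic.norm_p, PadicInt.padic_norm_e_of_padicInt]
  calc _ ≤ ((p : ℝ)⁻¹) ^ m * (p : ℝ) ^ (-((1 : ℕ) : ℤ)) := by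
        have := p_pos_real p
        gcongr
    _ = _ := by
      rw [← zpow_natCast, ← zpow_neg_one, ← zpow_mul, ← zpow_add₀ (p_pos_real p).ne']
      congr 1; push_cast; ring

lemma child_mem (a : ℚ_[p]) (m : ℕ) (i : ℕ) : a + (p : ℚ_[p]) ^ m * (i : ℚ_[p]) ∈ bl p a m := by
  rw [mem_bl]
  simp only [add_sub_cancel_left, norm_mul, norm_pow, Padic.norm_p]
  have : ‖(i : ℚ_[p])‖ ≤ 1 := by
    simpa using Padic.norm_int_le_one (p := p) (i : ℤ)
  have h2 := p_pos_real p
  calc _ ≤ ((p : ℝ)⁻¹) ^ m * 1 := by gcongr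
    _ = _ := by simp

lemma bl_disj (a : ℚ_[p]) (m : ℕ) {i j : ℕ} (hi : i < p) (hj : j < p) (hij : i ≠ j) :
    Disjoint (bl p (a + (p : ℚ_[p]) ^ m * (i : ℚ_[p])) (m + 1))
      (bl p (a + (p : ℚ_[p]) ^ m * (j : ℚ_[p])) (m + 1)) := by
  rw [Set.disjoint_left]
  intro x h1 h2
  have h3 := bl_eq_of_mem p h1
  have h4 := bl_eq_of_mem p h2
  have h5 := bl_mem_self p (a + (p : ℚ_[p]) ^ m * (i : ℚ_[p])) (m + 1)
  rw [← h3, h4, mem_bl] at h5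
  have e : a + (p : ℚ_[p]) ^ m * (i : ℚ_[p]) - (a + (p : ℚ_[p]) ^ m * (j : ℚ_[p])) =
    (p : ℚ_[p]) ^ m * (((i : ℤ) - (j : ℤ) : ℤ) : ℚ_[p]) := by push_cast; ring
  have hd : ¬ ((p : ℤ) ∣ ((i : ℤ) - (j : ℤ))) := by
    intro h
    have h6 := Int.eq_zero_of_abs_lt_dvd h (by rw [abs_lt]; constructor <;> omega)
    omega
  have hn : ‖(((i : ℤ) - (j : ℤ) : ℤ) : ℚ_[p])‖ = 1 := by
    have h7 := Padic.norm_int_le_one (p := p) ((i : ℤ) - (j : ℤ))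
    have h8 : ¬ ‖(((i : ℤ) - (j : ℤ) : ℤ) : ℚ_[p])‖ < 1 := by
      rwa [Padic.norm_intCast_lt_one_iff]
    linarith [not_lt.1 h8]
  rw [e, norm_mul, hn, norm_pow, Padic.norm_p, mul_one, inv_pow, ← zpow_natCast, ← zpow_neg] at h5
  have := (zpow_le_zpow_iff_right₀ (one_lt_p_real p)).1 h5
  push_cast at this
  omega

lemma bl_meas (a : ℚ_[p]) (m : ℕ) : MeasurableSet (bl p a m) := isClosed_closedBall.measurableSet

variable (μ : Measure ℚ_[p]) [μ.IsAddHaarMeasure]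

lemma bl_trans (a b : ℚ_[p]) (m : ℕ) : μ (bl p a m) = μ (bl p b m) := by
  have : bl p a m = (fun x => (b - a) + x) ⁻¹' (bl p b m) := by
    ext x; simp only [Set.mem_preimage, mem_bl]
    rw [show b - a + x - b = x - a by ring]
  rw [this, measure_preimage_add]

lemma bl_measure (a b : ℚ_[p]) (m : ℕ) : μ (bl p a m) = p * μ (bl p b (m + 1)) := by
  have h : bl p a m = ⋃ i ∈ Finset.range p, bl p (a + (p : ℚ_[p]) ^ m * (i : ℚ_[p])) (m + 1) := by
    ext x
    simp only [Set.mem_iUnion]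
    constructor
    · intro hx
      obtain ⟨i, hi, h⟩ := bl_cover p a m hx
      exact ⟨i, hi, h⟩
    · rintro ⟨i, hi, h⟩
      exact bl_sub p (child_mem p a m i) h
  rw [h, measure_biUnion_finset]
  · rw [Finset.sum_congr rfl (fun i _ => bl_trans p μ _ b (m + 1))]
    simp
  · intro i hi j hj hij
    exact bl_disj p a m (by simpa using hi) (by simpa using hj) hij
  · intro i _; exact bl_meas p _ _

lemma bl_measure_pow (a b : ℚ_[p]) (m s : ℕ) : μ (bl p a m) = (p : ℝ≥0∞) ^ s * μ (bl p b (m + s)) := by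
  induction s with
  | zero => simp [bl_trans p μ a b m]
  | succ s ih => rw [ih, bl_measure p μ b b (m + s), pow_succ, mul_assoc]; rfl

variable {P : Type*} [PartialOrder P]

def Prot (ψ : P → ℚ_[p] → ℝ) (θ : P → ℝ) (ε : ℝ) (F : Set P) (x : ℚ_[p]) : Prop :=
  ∃ F' : Set P, F ⊆ F' ∧ IsChain (· ≤ ·) F' ∧
    (∀ G ∈ F', G ∉ F → ε * θ G ≤ ψ G x ∧ ψ G x < θ G) ∧
    ∀ G, G ∉ F' → (∀ G' ∈ F', G ≤ G' ∨ G' ≤ G) → θ G ≤ ψ G x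

noncomputable def Kc (κ : ℝ≥0∞) : ℕ → ℝ≥0∞
  | 0 => 0
  | l + 1 => p * (Kc κ l + κ)

lemma nondiv (k : ℕ) (r : P → ℕ) (hr : ∀ G G', G < G' → r G < r G') (hr1 : ∀ G, 1 ≤ r G)
    (hrk : ∀ G, r G ≤ k) (ψ : P → ℚ_[p] → ℝ) (θ : P → ℝ) (ε : ℝ) (κ : ℝ≥0∞) (m0 : ℕ)
    (hgood : ∀ G, ∀ a ∈ bl p 0 0, ∀ m, ∀ x ∈ bl p a m, θ G ≤ ψ G x →
      μ {x ∈ bl p a m | ψ G x < ε * θ G} ≤ κ * μ (bl p a m))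
    (hloc : ∀ G, ∀ a ∈ bl p 0 0, ∀ x ∈ bl p a m0, ψ G x = ψ G a) :
    ∀ l : ℕ, ∀ F : Finset P, IsChain (· ≤ ·) (F : Set P) → k ≤ F.card + l →
    ∀ e m : ℕ, m0 ≤ m + e → ∀ a ∈ bl p 0 0,
    (∀ G, G ∉ F → (∀ G' ∈ F, G ≤ G' ∨ G' ≤ G) → ∃ x ∈ bl p a m, θ G ≤ ψ G x) →
    μ {x ∈ bl p a m | ¬ Prot p ψ θ ε F x} ≤ Kc p κ l * μ (bl p a m) := by
  classical
  intro l
  induction l with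
  | zero =>
    intro F hF hk e m _ a _ _
    have hno : ∀ G, G ∉ F → ¬ (∀ G' ∈ F, G ≤ G' ∨ G' ≤ G) := by
      intro G hG hc
      have hch : IsChain (· ≤ ·) ((insert G F : Finset P) : Set P) := by
        rw [Finset.coe_insert]
        exact hF.insert (fun b hb _ => hc b hb)
      have hinj : Set.InjOn r ((insert G F : Finset P) : Set P) := by
        intro x hx y hy hxy
        by_contra hne
        rcases hch hx hy hne with h | h
        · have := hr _ _ (lt_of_le_of_ne h hne); omega
        · have := hr _ _ (lt_of_le_of_ne h (Ne.symm hne)); omega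
      have h1 := Finset.card_le_card_of_injOn (t := Finset.Icc 1 k) r
        (fun x _ => by simpa using ⟨hr1 x, hrk x⟩) hinj
      rw [Finset.card_insert_of_notMem hG] at h1
      simp at h1
      omega
    have : {x ∈ bl p a m | ¬ Prot p ψ θ ε F x} = ∅ := by
      ext x
      simp only [Set.mem_ofPred_eq, Set.mem_empty_iff_false, iff_false, not_and, not_not]
      intro _
      exact ⟨F, subset_rfl, hF, fun G h1 h2 => absurd h1 h2, fun G h1 h2 => absurd h2 (hno G h1)⟩
    rw [this]; simp
  | succ l ihl =>
    intro F hF hk e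
    induction e with
    | zero =>
      intro m hm a ha hsup
      have : {x ∈ bl p a m | ¬ Prot p ψ θ ε F x} = ∅ := by
        ext x
        simp only [Set.mem_ofPred_eq, Set.mem_empty_iff_false, iff_false, not_and, not_not]
        intro hx
        refine ⟨F, subset_rfl, hF, fun G h1 h2 => absurd h1 h2, fun G h1 h2 => ?_⟩
        obtain ⟨y, hy, hy2⟩ := hsup G h1 h2
        obtain ⟨c, rfl⟩ := Nat.exists_eq_add_of_le hm
        have hsub := bl_sub p (s := c) (bl_mem_self p a m0)
        rw [hloc G a ha x (hsub hx), ← hloc G a ha y (hsub hy)]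
        exact hy2
      rw [this]; simp
    | succ e ihe =>
      intro m hm a ha hsup
      have key : ∀ i ∈ Finset.range p,
          μ {x ∈ bl p (a + (p : ℚ_[p]) ^ m * (i : ℚ_[p])) (m + 1) | ¬ Prot p ψ θ ε F x} ≤
          Kc p κ (l + 1) * μ (bl p a (m + 1)) := by
        intro i _
        set c := a + (p : ℚ_[p]) ^ m * (i : ℚ_[p]) with hc
        have hca : c ∈ bl p a m := child_mem p a m i
        have hc0 : c ∈ bl p 0 0 := by
          rw [← bl_eq_of_mem p ha]
          have := bl_sub p (s := m) (bl_mem_self p a 0)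
          rw [zero_add] at this
          exact this hca
        by_cases H : ∀ G, G ∉ F → (∀ G' ∈ F, G ≤ G' ∨ G' ≤ G) → ∃ x ∈ bl p c (m + 1), θ G ≤ ψ G x
        · rw [bl_trans p μ a c (m + 1)]
          exact ihe (m + 1) (by omega) c hc0 H
        · push Not at H
          obtain ⟨G, hG, hGc, hGlt⟩ := H
          have hch : IsChain (· ≤ ·) ((insert G F : Finset P) : Set P) := by
            rw [Finset.coe_insert]
            exact hF.insert (fun b hb _ => hGc b hb)
          have h1 := ihl (insert G F) hch (by rw [Finset.card_insert_of_notMem hG]; omega)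
            (e + 1) m hm a ha (by
              intro G1 h1 h2
              apply hsup G1 (fun h => h1 (Finset.mem_insert_of_mem h))
              exact fun G' h => h2 G' (Finset.mem_insert_of_mem h))
          obtain ⟨y, hy, hyG⟩ := hsup G hG hGc
          have h2 := hgood G a ha m y hy hyG
          have hsub : {x ∈ bl p c (m + 1) | ¬ Prot p ψ θ ε F x} ⊆
              {x ∈ bl p a m | ¬ Prot p ψ θ ε (insert G F : Finset P) x} ∪
              {x ∈ bl p a m | ψ G x < ε * θ G} := by
            rintro x ⟨hx, hxP⟩
            have hxa : x ∈ bl p a m := bl_sub p hca hx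
            by_contra hcon
            simp only [Set.mem_union, Set.mem_ofPred_eq, not_or, not_and, not_not, not_lt] at hcon
            obtain ⟨F', hFF, hF'c, hF1, hF2⟩ := hcon.1 hxa
            apply hxP
            refine ⟨F', fun z hz => hFF (by simp [Finset.mem_coe.1 hz]), hF'c, ?_, hF2⟩
            intro G1 hG1 hG1F
            by_cases hGG : G1 = G
            · subst hGG
              exact ⟨hcon.2 hxa, hGlt x hx⟩
            · exact hF1 G1 hG1 (by simp [hGG]; simpa using hG1F)
          calc _ ≤ _ := measure_mono hsub
            _ ≤ _ := measure_union_le _ _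
            _ ≤ Kc p κ l * μ (bl p a m) + κ * μ (bl p a m) := add_le_add h1 h2
            _ = _ := by
              rw [bl_measure p μ a a m, Kc]; ring
      calc μ {x ∈ bl p a m | ¬ Prot p ψ θ ε F x}
          ≤ μ (⋃ i ∈ Finset.range p,
            {x ∈ bl p (a + (p : ℚ_[p]) ^ m * (i : ℚ_[p])) (m + 1) | ¬ Prot p ψ θ ε F x}) := by
            apply measure_mono
            rintro x ⟨hx, hxP⟩
            obtain ⟨i, hi, h⟩ := bl_cover p a m hx
            simp only [Set.mem_iUnion]
            exact ⟨i, hi, h, hxP⟩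
        _ ≤ _ := measure_biUnion_finset_le _ _
        _ ≤ _ := Finset.sum_le_sum key
        _ = _ := by
          rw [bl_measure p μ a a m]; simp; ring

end


section

def GoodF : ℕ → (ℚ_[p] → ℚ_[p]) → Prop
  | 0, g => ∀ s t : ℚ_[p], ‖s‖ ≤ 1 → ‖t‖ ≤ 1 → ‖g s‖ = ‖g t‖
  | N + 1, g => ∀ u : ℚ_[p], ‖u‖ ≤ 1 → ∃ g1, GoodF N g1 ∧
      ∀ s : ℚ_[p], ‖s‖ ≤ 1 → g s - g u = (s - u) * g1 s

lemma GoodF.sep (N : ℕ) : ∀ (g : ℚ_[p] → ℚ_[p]), GoodF p N g → ∀ (u : Fin (N + 1) → ℚ_[p])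
    (η R ε : ℝ), 0 < η → 1 ≤ R → (∀ i, ‖u i‖ ≤ 1) → (∀ i j, i ≠ j → η ≤ ‖u i - u j‖) →
    (∀ i, ‖g (u i)‖ ≤ ε) → ∀ s : ℚ_[p], ‖s‖ ≤ 1 → (∀ i, ‖s - u i‖ ≤ η * R) →
    ‖g s‖ ≤ ε * R ^ N := by
  induction N with
  | zero =>
    intro g hg u η R ε hη hR hu hsep hε s hs _
    rw [hg s (u 0) hs (hu 0)]
    simpa using hε 0
  | succ N ih =>
    intro g hg u η R ε hη hR hu hsep hε s hs hsu
    obtain ⟨g1, hg1, hgg⟩ := hg (u 0) (hu 0)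
    have hε0 : 0 ≤ ε := le_trans (norm_nonneg _) (hε 0)
    have h1 := ih g1 hg1 (fun i => u i.succ) η R (ε / η) hη hR (fun i => hu _)
      (fun i j hij => hsep _ _ (by simpa using hij)) (by
        intro i
        have h2 := hgg (u i.succ) (hu _)
        have h3 : ‖u i.succ - u 0‖ * ‖g1 (u i.succ)‖ ≤ ε := by
          rw [← norm_mul, ← h2, sub_eq_add_neg]
          refine le_trans (IsUltrametricDist.norm_add_le_max _ _) ?_
          rw [norm_neg]
          exact max_le (hε _) (hε _)
        have h4 := hsep i.succ 0 (Fin.succ_ne_zero i)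
        rw [le_div_iff₀ hη, mul_comm]
        exact le_trans (mul_le_mul_of_nonneg_right h4 (norm_nonneg _)) h3) s hs (fun i => hsu _)
    have h2 := hgg s hs
    rw [sub_eq_iff_eq_add] at h2
    rw [h2]
    refine le_trans (IsUltrametricDist.norm_add_le_max _ _) (max_le ?_ ?_)
    · rw [norm_mul]
      calc _ ≤ (η * R) * (ε / η * R ^ N) := by
            gcongr
            exact hsu 0
        _ = _ := by field_simp; ring
    · refine le_trans (hε 0) ?_
      exact le_mul_of_one_le_right hε0 (one_le_pow₀ hR)

lemma sep_or_cover (E : Set ℚ_[p]) (m : ℕ) (N : ℕ) :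
    (∃ u : Fin N → ℚ_[p], (∀ i, u i ∈ E) ∧ ∀ i j, i ≠ j → u i ∉ bl p (u j) m) ∨
    ∃ S : Finset ℚ_[p], S.card < N ∧ E ⊆ ⋃ x ∈ S, bl p x m := by
  classical
  induction N with
  | zero => left; exact ⟨fun i => i.elim0, fun i => i.elim0, fun i => i.elim0⟩
  | succ N ih =>
    rcases ih with ⟨u, hu, hs⟩ | ⟨S, hS, hE⟩
    · by_cases h : ∃ x ∈ E, ∀ i, x ∉ bl p (u i) m
      · obtain ⟨x, hx, hxu⟩ := h
        left
        refine ⟨Fin.cons x u, ?_, ?_⟩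
        · intro i
          refine Fin.cases ?_ ?_ i
          · simpa using hx
          · intro i; simpa using hu i
        · intro i j
          refine Fin.cases ?_ (fun i => ?_) i <;> refine Fin.cases ?_ (fun j => ?_) j
          · simp
          · intro _; simpa using hxu j
          · intro _ hc
            simp only [Fin.cons_succ, Fin.cons_zero] at hc
            apply hxu i
            have h5 := bl_mem_self p x m
            rw [← bl_eq_of_mem p hc] at h5
            exact h5
          · intro hij
            simp only [Fin.cons_succ]
            exact hs i j (by simpa using hij)
      · right
        push Not at h
        refine ⟨Finset.univ.image u, ?_, ?_⟩
        · refine lt_of_le_of_lt Finset.card_image_le ?_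
          simp
        · intro x hx
          obtain ⟨i, hi⟩ := h x hx
          simp only [Set.mem_iUnion]
          exact ⟨u i, by simp, hi⟩
    · right; exact ⟨S, by omega, hE⟩

variable (μ : Measure ℚ_[p]) [μ.IsAddHaarMeasure]

lemma unit_of_mem {a x : ℚ_[p]} {m : ℕ} (ha : a ∈ bl p 0 0) (hx : x ∈ bl p a m) : ‖x‖ ≤ 1 := by
  have := bl_sub p (s := m) (bl_mem_self p a 0)
  rw [zero_add] at this
  have h := this hx
  rw [bl_eq_of_mem p ha, mem_bl] at h
  simpa using h

lemma GoodF.measure (N N' : ℕ) (hN : N' ≤ N) (g : ℚ_[p] → ℚ_[p]) (hg : GoodF p N' g)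
    (a : ℚ_[p]) (ha : a ∈ bl p 0 0) (m s : ℕ) (x1 : ℚ_[p]) (hx1 : x1 ∈ bl p a m) :
    μ {x ∈ bl p a m | ‖g x‖ < ((p : ℝ) ^ (s * N))⁻¹ * ‖g x1‖} ≤
      (N * ((p : ℝ≥0∞) ^ s)⁻¹) * μ (bl p a m) := by
  classical
  have hp := one_lt_p_real p
  have hp0 := p_pos_real p
  rcases sep_or_cover p {x ∈ bl p a m | ‖g x‖ < ((p : ℝ) ^ (s * N))⁻¹ * ‖g x1‖} (m + s) (N' + 1) with
    ⟨u, hu, hs⟩ | ⟨S, hS, hE⟩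
  · exfalso
    set ε := Finset.univ.sup' Finset.univ_nonempty (fun i => ‖g (u i)‖) with hε
    have hε1 : ε < ((p : ℝ) ^ (s * N))⁻¹ * ‖g x1‖ := by
      rw [hε, Finset.sup'_lt_iff]
      intro i _; exact (hu i).2
    have h := GoodF.sep p N' g hg u ((p : ℝ) ^ (-((m + s : ℕ) : ℤ))) ((p : ℝ) ^ s) ε (by positivity)
      (one_le_pow₀ hp.le) (fun i => unit_of_mem p ha (hu i).1) (by
        intro i j hij
        have := hs i j hij
        rw [mem_bl] at this
        linarith) (by
        intro i
        exact Finset.le_sup' (fun i => ‖g (u i)‖) (Finset.mem_univ i)) x1 (unit_of_mem p ha hx1) (by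
        intro i
        have h1 := (hu i).1
        rw [← bl_eq_of_mem p h1, mem_bl] at hx1
        refine hx1.trans (le_of_eq ?_)
        rw [← zpow_natCast, ← zpow_add₀ hp0.ne']
        congr 1; push_cast; ring)
    have h3 : ε * (p : ℝ) ^ (s * N) < ‖g x1‖ := by
      rw [mul_comm] at hε1
      have := (lt_mul_inv_iff₀ (by positivity)).1 hε1
      exact this
    have hε0 : 0 ≤ ε := le_trans (norm_nonneg _) (Finset.le_sup' (fun i => ‖g (u i)‖) (Finset.mem_univ 0))
    have h4 : ((p : ℝ) ^ s) ^ N' ≤ (p : ℝ) ^ (s * N) := by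
      rw [← pow_mul]
      exact pow_le_pow_right₀ hp.le (Nat.mul_le_mul_left _ hN)
    have h5 := mul_le_mul_of_nonneg_left h4 hε0
    linarith
  · calc _ ≤ _ := measure_mono hE
      _ ≤ _ := measure_biUnion_finset_le _ _
      _ = S.card * μ (bl p a (m + s)) := by
        rw [Finset.sum_congr rfl (fun i _ => bl_trans p μ i a (m + s))]; simp
      _ ≤ N * μ (bl p a (m + s)) := by
        gcongr
        omega
      _ = _ := by
        rw [bl_measure_pow p μ a a m s, mul_assoc, ← mul_assoc ((p : ℝ≥0∞) ^ s)⁻¹,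
          ENNReal.inv_mul_cancel, one_mul]
        · have : (p : ℝ≥0∞) ≠ 0 := by exact_mod_cast (Fact.out : p.Prime).ne_zero
          exact pow_ne_zero _ this
        · exact ENNReal.pow_ne_top (ENNReal.natCast_ne_top p)

def WS (N : ℕ) (a : ℕ → ℚ_[p]) : Prop := a N ≠ 0 ∧ ∀ k, N < k → ‖a k‖ < ‖a N‖

noncomputable def ev (a : ℕ → ℚ_[p]) (s : ℚ_[p]) : ℚ_[p] := ∑' k, a k * s ^ k

open Filter Topology in
lemma summable_ev {a : ℕ → ℚ_[p]} (ha : Tendsto a atTop (𝓝 0)) {s : ℚ_[p]} (hs : ‖s‖ ≤ 1) (j : ℕ) :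
    Summable (fun k => a (j + k) * s ^ k) := by
  apply NonarchimedeanAddGroup.summable_of_tendsto_cofinite_zero
  rw [Nat.cofinite_eq_atTop]
  have h1 : Tendsto (fun k => a (j + k)) atTop (𝓝 0) := by
    simp_rw [add_comm j]
    exact (tendsto_add_atTop_iff_nat j).2 ha
  rw [tendsto_zero_iff_norm_tendsto_zero] at h1 ⊢
  refine squeeze_zero (fun _ => norm_nonneg _) (fun k => ?_) h1
  rw [norm_mul, norm_pow]
  exact mul_le_of_le_one_right (norm_nonneg _) (pow_le_one₀ (norm_nonneg _) hs)

open Filter Topology in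
lemma norm_ev_lt {a : ℕ → ℚ_[p]} (ha : Tendsto a atTop (𝓝 0)) {s : ℚ_[p]} (hs : ‖s‖ ≤ 1) (j : ℕ)
    {A : ℝ} (hA : 0 < A) (h : ∀ k, j ≤ k → ‖a k‖ < A) : ‖∑' k, a (j + k) * s ^ k‖ < A := by
  have hs' := (summable_ev p ha hs j).hasSum.tendsto_sum_nat
  have hev := (tendsto_zero_iff_norm_tendsto_zero.1 ha).eventually (gt_mem_nhds hA)
  have hlt : ∀ n : ℕ, ‖∑ i ∈ Finset.range n, a (j + i) * s ^ i‖ < A := by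
    intro n
    induction n with
    | zero => simpa using hA
    | succ n ih =>
      rw [Finset.sum_range_succ]
      refine lt_of_le_of_lt (IsUltrametricDist.norm_add_le_max _ _) (max_lt ih ?_)
      refine lt_of_le_of_lt ?_ (h (j + n) (by omega))
      rw [norm_mul, norm_pow]
      exact mul_le_of_le_one_right (norm_nonneg _) (pow_le_one₀ (norm_nonneg _) hs)
  -- the ball is closed
  have hcl : IsClosed (ball (0 : ℚ_[p]) A) := IsUltrametricDist.isClosed_ball _ _
  have := hcl.mem_of_tendsto hs' (Eventually.of_forall (fun n => by simpa using hlt n))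
  simpa using this

open Filter Topology in
lemma tail_rec {a : ℕ → ℚ_[p]} (ha : Tendsto a atTop (𝓝 0)) {u : ℚ_[p]} (hu : ‖u‖ ≤ 1) (j : ℕ) :
    ∑' k, a (j + k) * u ^ k = a j + u * ∑' k, a (j + 1 + k) * u ^ k := by
  rw [(summable_ev p ha hu j).tsum_eq_zero_add, ← tsum_mul_left]
  simp only [add_zero, pow_zero, mul_one]
  congr 1
  apply tsum_congr
  intro k
  rw [show j + (k + 1) = j + 1 + k by ring]
  ring

open Filter Topology in
lemma tail_tendsto {a : ℕ → ℚ_[p]} (ha : Tendsto a atTop (𝓝 0)) {u : ℚ_[p]} (hu : ‖u‖ ≤ 1) :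
    Tendsto (fun j => ∑' k, a (j + k) * u ^ k) atTop (𝓝 0) := by
  rw [Metric.tendsto_atTop] at ha ⊢
  intro ε hε
  obtain ⟨N, hN⟩ := ha ε hε
  refine ⟨N, fun n hn => ?_⟩
  rw [dist_zero_right]
  apply norm_ev_lt p (Metric.tendsto_atTop.2 ha) hu n hε
  intro k hk
  simpa using hN k (by omega)

open Filter Topology in
lemma WS.goodF (N : ℕ) : ∀ a : ℕ → ℚ_[p], Tendsto a atTop (𝓝 0) → WS p N a → GoodF p N (ev p a) := by
  induction N with
  | zero =>
    intro a ha hw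
    have key : ∀ s : ℚ_[p], ‖s‖ ≤ 1 → ‖ev p a s‖ = ‖a 0‖ := by
      intro s hs
      have h1 := tail_rec p ha hs 0
      simp only [zero_add] at h1
      rw [ev, h1]
      have h2 : ‖s * ∑' k, a (1 + k) * s ^ k‖ < ‖a 0‖ := by
        rw [norm_mul]
        refine lt_of_le_of_lt (mul_le_of_le_one_left (norm_nonneg _) hs) ?_
        exact norm_ev_lt p ha hs 1 (norm_pos_iff.2 hw.1) (fun k hk => hw.2 k (by omega))
      rw [IsUltrametricDist.norm_add_eq_max_of_norm_ne_norm h2.ne', max_eq_left h2.le]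
    intro s t hs ht
    rw [key s hs, key t ht]
  | succ N ih =>
    intro a ha hw u hu
    set b : ℕ → ℚ_[p] := fun j => ∑' k, a (j + 1 + k) * u ^ k with hb
    have hbt : Tendsto b atTop (𝓝 0) := by
      have := tail_tendsto p ha hu
      exact (tendsto_add_atTop_iff_nat (f := fun j => ∑' k, a (j + k) * u ^ k) 1).2 this
    have hA : 0 < ‖a (N + 1)‖ := norm_pos_iff.2 hw.1
    have hbN : ‖b N‖ = ‖a (N + 1)‖ := by
      have h1 := tail_rec p ha hu (N + 1)
      simp only [hb]
      rw [h1]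
      have h2 : ‖u * ∑' k, a (N + 1 + 1 + k) * u ^ k‖ < ‖a (N + 1)‖ := by
        rw [norm_mul]
        refine lt_of_le_of_lt (mul_le_of_le_one_left (norm_nonneg _) hu) ?_
        exact norm_ev_lt p ha hu _ hA (fun k hk => hw.2 k (by omega))
      rw [IsUltrametricDist.norm_add_eq_max_of_norm_ne_norm h2.ne', max_eq_left h2.le]
    refine ⟨ev p b, ih b hbt ⟨?_, ?_⟩, ?_⟩
    · rw [← norm_pos_iff, hbN]; exact hA
    · intro k hk
      rw [hbN]
      exact norm_ev_lt p ha hu _ hA (fun i hi => hw.2 i (by omega))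
    · intro s hs
      have sa := summable_ev p ha hs 0
      have sb := summable_ev p hbt hs 0
      simp only [zero_add] at sa sb
      have hgu : ev p a u = a 0 + u * b 0 := by
        have := tail_rec p ha hu 0
        simpa [ev, hb] using this
      have hrec : ∀ j, b j = a (j + 1) + u * b (j + 1) := fun j => tail_rec p ha hu (j + 1)
      have e1 : ev p a s = a 0 + s * ∑' k, a (k + 1) * s ^ k := by
        have := tail_rec p ha hs 0
        simp only [zero_add] at this
        rw [ev, this]
        simp_rw [add_comm 1]
      have e2 : ev p b s = b 0 + s * ∑' k, b (k + 1) * s ^ k := by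
        have := tail_rec p hbt hs 0
        simp only [zero_add] at this
        rw [ev, this]
        simp_rw [add_comm 1]
      have sa1 := summable_ev p ha hs 1
      have sb1 := summable_ev p hbt hs 1
      simp_rw [add_comm 1] at sa1 sb1
      have e3 : ev p b s = ∑' k, a (k + 1) * s ^ k + u * ∑' k, b (k + 1) * s ^ k := by
        rw [← tsum_mul_left, ← sa1.tsum_add (sb1.mul_left u), ev]
        apply tsum_congr
        intro k
        rw [hrec k]; ring
      have e4 : s * ev p b s = s * ∑' k, a (k + 1) * s ^ k + u * (s * ∑' k, b (k + 1) * s ^ k) := by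
        rw [e3]; ring
      have e5 : s * ∑' k, b (k + 1) * s ^ k = ev p b s - b 0 := by rw [e2]; ring
      rw [sub_mul, e4, e5, e1, hgu]
      ring

end


section

lemma GoodF.congr {N : ℕ} {g g' : ℚ_[p] → ℚ_[p]} (h : ∀ s : ℚ_[p], ‖s‖ ≤ 1 → g s = g' s)
    (hg : GoodF p N g) : GoodF p N g' := by
  cases N with
  | zero =>
    intro s t hs ht
    rw [← h s hs, ← h t ht]; exact hg s t hs ht
  | succ N =>
    intro u hu
    obtain ⟨g1, h1, h2⟩ := hg u hu
    exact ⟨g1, h1, fun s hs => by rw [← h s hs, ← h u hu]; exact h2 s hs⟩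

open Filter Topology in
lemma exists_WS_of_bound {w : ℕ → ℚ_[p]} (N : ℕ) (hw : ∀ j, ‖w j‖ ≤ 1) (j0 : ℕ) (hj0 : ‖w j0‖ = 1)
    (hN : ∀ j, N < j → ‖w j‖ < 1) : ∃ N' ≤ N, WS p N' w := by
  classical
  have hle : ∀ j, ‖w j‖ = 1 → j ≤ N := by
    intro j hj
    by_contra h
    have := hN j (by omega)
    linarith
  set N' := Nat.findGreatest (fun j => ‖w j‖ = 1) N with hN'
  have h1 : ‖w N'‖ = 1 := Nat.findGreatest_spec (P := fun j => ‖w j‖ = 1) (hle j0 hj0) hj0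
  refine ⟨N', Nat.findGreatest_le N, ?_, ?_⟩
  · rw [← norm_pos_iff, h1]; norm_num
  · intro k hk
    rw [h1]
    refine lt_of_le_of_ne (hw k) (fun h => ?_)
    exact Nat.findGreatest_is_greatest hk (hle k h) h

open Filter Topology in
lemma exists_max_null {w : ℕ → ℚ_[p]} (hw : Tendsto w atTop (𝓝 0)) (hne : ∃ j, w j ≠ 0) :
    ∃ j0, w j0 ≠ 0 ∧ ∀ j, ‖w j‖ ≤ ‖w j0‖ := by
  obtain ⟨j1, hj1⟩ := hne
  have hev := (tendsto_zero_iff_norm_tendsto_zero.1 hw).eventually (gt_mem_nhds (norm_pos_iff.2 hj1))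
  obtain ⟨M, hM⟩ := eventually_atTop.1 hev
  obtain ⟨j0, _, h0⟩ := Finset.exists_max_image (Finset.range (max M (j1 + 1))) (fun j => ‖w j‖)
    ⟨j1, by simp⟩
  have h1 := h0 j1 (by simp)
  refine ⟨j0, ?_, ?_⟩
  · rw [← norm_pos_iff]
    exact lt_of_lt_of_le (norm_pos_iff.2 hj1) h1
  · intro j
    by_cases hj : j < max M (j1 + 1)
    · exact h0 j (by simpa using hj)
    · have := hM j (by simp at hj; omega)
      linarith

open Filter Topology in
lemma unif_WS (k : ℕ) (a : Fin k → ℕ → ℚ_[p]) (ha : ∀ i, Tendsto (a i) atTop (𝓝 0)) :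
    ∃ N, ∀ c : Fin k → ℚ_[p], (∀ j, ∑ i, c i * a i j = 0) ∨
      ∃ N' ≤ N, WS p N' (fun j => ∑ i, c i * a i j) := by
  have hmem : ∀ i, Memℓp (a i) ∞ := by
    intro i
    rw [memℓp_infty_iff]
    obtain ⟨C, hC⟩ := (ha i).norm.bddAbove_range
    exact ⟨C, hC⟩
  let A : Fin k → lp (fun _ : ℕ => ℚ_[p]) ∞ := fun i => ⟨a i, hmem i⟩
  let W : Submodule ℚ_[p] (lp (fun _ : ℕ => ℚ_[p]) ∞) := Submodule.span ℚ_[p] (Set.range A)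
  have hfd : FiniteDimensional ℚ_[p] W := FiniteDimensional.span_of_finite _ (Set.finite_range A)
  have hprop : ProperSpace W := FiniteDimensional.proper ℚ_[p] W
  have hnull : ∀ w ∈ W, Tendsto (fun j => (w : ℕ → ℚ_[p]) j) atTop (𝓝 0) := by
    intro w hw
    induction hw using Submodule.span_induction with
    | mem x hx => obtain ⟨i, rfl⟩ := hx; exact ha i
    | zero => exact tendsto_const_nhds
    | add x y _ _ hx hy => simpa using hx.add hy
    | smul c x _ hx => simpa using hx.const_mul c
  obtain ⟨T, -, hTf, hT⟩ := (isCompact_closedBall (0 : W) 1).finite_cover_balls (e := 1) one_pos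
  have hN : ∀ w : W, ∃ N : ℕ, ∀ j, N < j → ‖((w : lp (fun _ : ℕ => ℚ_[p]) ∞) : ℕ → ℚ_[p]) j‖ < 1 := by
    intro w
    have hev := (tendsto_zero_iff_norm_tendsto_zero.1 (hnull w w.2)).eventually (gt_mem_nhds one_pos)
    obtain ⟨M, hM⟩ := eventually_atTop.1 hev
    exact ⟨M, fun j hj => hM j hj.le⟩
  choose Nf hNf using hN
  refine ⟨hTf.toFinset.sup Nf, fun c => ?_⟩
  by_cases hz : ∀ j, ∑ i, c i * a i j = 0
  · left; exact hz
  right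
  push Not at hz
  set w : ℕ → ℚ_[p] := fun j => ∑ i, c i * a i j with hw
  have hwt : Tendsto w atTop (𝓝 0) := by
    have : Tendsto w atTop (𝓝 (∑ i : Fin k, c i * 0)) := by
      apply tendsto_finsetSum
      intro i _
      exact (ha i).const_mul _
    simpa using this
  obtain ⟨j0, hj0, hmax⟩ := exists_max_null p hwt hz
  -- normalised element
  let v : lp (fun _ : ℕ => ℚ_[p]) ∞ := ∑ i, ((w j0)⁻¹ * c i) • A i
  have hvW : v ∈ W := Submodule.sum_mem _ (fun i _ => Submodule.smul_mem _ _ (Submodule.subset_span ⟨i, rfl⟩))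
  have hvj : ∀ j, (v : ℕ → ℚ_[p]) j = (w j0)⁻¹ * w j := by
    intro j
    have : (v : ℕ → ℚ_[p]) j = ∑ i, (((w j0)⁻¹ * c i) • (A i : ℕ → ℚ_[p])) j := by
      simp only [v]
      rw [lp.coeFn_sum]
      simp
    rw [this, hw, Finset.mul_sum]
    apply Finset.sum_congr rfl
    intro i _
    simp [A, mul_assoc]
  have hv1 : ∀ j, ‖(v : ℕ → ℚ_[p]) j‖ ≤ 1 := by
    intro j
    rw [hvj, norm_mul, norm_inv, inv_mul_le_iff₀ (norm_pos_iff.2 hj0), mul_one]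
    exact hmax j
  have hvn : ‖v‖ ≤ 1 := lp.norm_le_of_forall_le zero_le_one hv1
  have hvb : (⟨v, hvW⟩ : W) ∈ closedBall (0 : W) 1 := by simpa using hvn
  obtain ⟨τ, hτ, hvτ⟩ := Set.mem_iUnion₂.1 (hT hvb)
  obtain ⟨N', hN', h⟩ := exists_WS_of_bound p (w := fun j => (v : ℕ → ℚ_[p]) j)
    (hTf.toFinset.sup Nf) hv1 j0 (by rw [hvj, inv_mul_cancel₀ hj0]; simp) (by
      intro j hj
      have h1 : Nf τ ≤ hTf.toFinset.sup Nf := Finset.le_sup (by simpa using hτ)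
      have h2 := hNf τ j (by omega)
      have h3 : ‖v - (τ : lp (fun _ : ℕ => ℚ_[p]) ∞)‖ < 1 := by
        rw [mem_ball, dist_eq_norm] at hvτ
        exact hvτ
      have h4 := lp.norm_apply_le_norm (by simp) (v - (τ : lp (fun _ : ℕ => ℚ_[p]) ∞)) j
      have h5 : (v : ℕ → ℚ_[p]) j = (v - (τ : lp (fun _ : ℕ => ℚ_[p]) ∞) : lp (fun _ : ℕ => ℚ_[p]) ∞) j
        + (τ : lp (fun _ : ℕ => ℚ_[p]) ∞) j := by simp
      rw [h5]
      refine lt_of_le_of_lt (IsUltrametricDist.norm_add_le_max _ _) (max_lt ?_ h2)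
      exact lt_of_le_of_lt h4 h3)
  refine ⟨N', hN', ?_, ?_⟩
  · intro h0
    apply h.1
    simp only [hvj]; rw [h0]; simp
  · intro i hi
    have := h.2 i hi
    simp only [hvj, norm_mul] at this
    exact lt_of_mul_lt_mul_left this (norm_nonneg _)

open Filter Topology in
lemma unif_good (k : ℕ) (a : Fin k → ℕ → ℚ_[p]) (ha : ∀ i, Tendsto (a i) atTop (𝓝 0)) :
    ∃ N, ∀ c : Fin k → ℚ_[p], ∃ N' ≤ N, GoodF p N' (fun s => ∑ i, c i * ev p (a i) s) := by
  obtain ⟨N, hN⟩ := unif_WS p k a ha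
  refine ⟨N, fun c => ?_⟩
  have hev : ∀ s : ℚ_[p], ‖s‖ ≤ 1 → ev p (fun j => ∑ i, c i * a i j) s = ∑ i, c i * ev p (a i) s := by
    intro s hs
    simp only [ev]
    simp_rw [← tsum_mul_left]
    rw [← Summable.tsum_finsetSum]
    · apply tsum_congr
      intro j
      rw [Finset.sum_mul]
      exact Finset.sum_congr rfl (fun i _ => by ring)
    · intro i _
      have := summable_ev p (ha i) hs 0
      simp only [zero_add] at this
      exact this.mul_left _
  rcases hN c with h | ⟨N', hN', h⟩
  · refine ⟨0, Nat.zero_le _, ?_⟩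
    refine GoodF.congr p hev ?_
    intro s t _ _
    simp [ev, h]
  · refine ⟨N', hN', GoodF.congr p hev (WS.goodF p N' _ ?_ h)⟩
    have : Tendsto (fun j => ∑ i, c i * a i j) atTop (𝓝 (∑ i : Fin k, c i * 0)) := by
      apply tendsto_finsetSum
      intro i _
      exact (ha i).const_mul _
    simpa using this

open Filter Topology in
lemma ev_continuousOn {a : ℕ → ℚ_[p]} (ha : Tendsto a atTop (𝓝 0)) :
    ContinuousOn (ev p a) (closedBall 0 1) := by
  have hu : TendstoUniformlyOn (fun n s => ∑ k ∈ Finset.range n, a k * s ^ k) (ev p a) atTop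
      (closedBall 0 1) := by
    rw [Metric.tendstoUniformlyOn_iff]
    intro ε hε
    rw [Metric.tendsto_atTop] at ha
    obtain ⟨N, hN⟩ := ha ε hε
    filter_upwards [eventually_ge_atTop N] with n hn s hs
    have hs1 : ‖s‖ ≤ 1 := by simpa using hs
    have ha' := Metric.tendsto_atTop.2 ha
    have h1 := summable_ev p ha' hs1 0
    simp only [zero_add] at h1
    rw [dist_eq_norm, ev, ← h1.sum_add_tsum_nat_add n, add_sub_cancel_left]
    have h2 : ∑' i, a (i + n) * s ^ (i + n) = s ^ n * ∑' i, a (n + i) * s ^ i := by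
      rw [← tsum_mul_left]
      apply tsum_congr; intro i
      rw [add_comm i n]; ring
    rw [h2, norm_mul, norm_pow]
    refine lt_of_le_of_lt (mul_le_of_le_one_left (norm_nonneg _) (pow_le_one₀ (norm_nonneg _) hs1)) ?_
    apply norm_ev_lt p ha' hs1 n hε
    intro i hi
    simpa using hN i (by omega)
  apply hu.continuousOn
  exact Frequently.of_forall (fun n => by fun_prop)

end


section

def minorMat {j k : ℕ} (b : Fin j → Fin k → ℤ) (I : Fin j → Fin k) : Matrix (Fin j) (Fin j) ℤ :=
  Matrix.of fun a c => b a (I c)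

def minorMax {j k : ℕ} (b : Fin j → Fin k → ℤ) : ℕ :=
  Finset.univ.sup fun I : Fin j → Fin k => (minorMat b I).det.natAbs

lemma le_minorMax {j k : ℕ} (b : Fin j → Fin k → ℤ) (I : Fin j → Fin k) :
    (minorMat b I).det.natAbs ≤ minorMax b :=
  Finset.le_sup (f := fun I : Fin j → Fin k => (minorMat b I).det.natAbs) (Finset.mem_univ I)

lemma minorMax_trans {j k : ℕ} (b b' : Fin j → Fin k → ℤ) (T : Matrix (Fin j) (Fin j) ℤ)
    (h : ∀ i, b i = ∑ l, T i l • b' l) : T.det.natAbs * minorMax b' ≤ minorMax b := by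
  have hm : ∀ I, minorMat b I = T * minorMat b' I := by
    intro I
    ext a c
    simp [minorMat, Matrix.mul_apply, h]
  rcases Nat.eq_zero_or_pos T.det.natAbs with h0 | h0
  · simp [h0]
  · rw [mul_comm, ← Nat.le_div_iff_mul_le h0]
    apply Finset.sup_le
    intro I _
    rw [Nat.le_div_iff_mul_le h0, mul_comm, ← Int.natAbs_mul, ← Matrix.det_mul, ← hm]
    exact le_minorMax b I

lemma minorMax_cons {j k : ℕ} (v : Fin k → ℤ) (b : Fin j → Fin k → ℤ) :
    (minorMax (Fin.cons v b : Fin (j + 1) → Fin k → ℤ) : ℝ) ≤ (j + 1) * ‖v‖ * minorMax b := by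
  have hI : ∀ I : Fin (j + 1) → Fin k,
      (((minorMat (Fin.cons v b : Fin (j + 1) → Fin k → ℤ) I).det.natAbs : ℕ) : ℝ)
        ≤ (j + 1) * ‖v‖ * minorMax b := by
    intro I
    rw [Nat.cast_natAbs, Int.cast_abs, Matrix.det_succ_row_zero]
    simp only [Int.cast_sum, Int.cast_mul, Int.cast_pow, Int.cast_neg, Int.cast_one]
    refine (Finset.abs_sum_le_sum_abs _ _).trans ?_
    calc _ ≤ ∑ c : Fin (j + 1), ‖v‖ * (minorMax b : ℝ) := by
          apply Finset.sum_le_sum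
          intro c _
          rw [abs_mul, abs_mul]
          have h1 : |((-1 : ℝ)) ^ (c : ℕ)| = 1 := by simp
          rw [h1, one_mul]
          have h2 : |((minorMat (Fin.cons v b : Fin (j + 1) → Fin k → ℤ) I 0 c : ℤ) : ℝ)| ≤ ‖v‖ := by
            have := norm_le_pi_norm v (I c)
            simpa [minorMat, Int.norm_eq_abs] using this
          have h3 : (minorMat (Fin.cons v b : Fin (j + 1) → Fin k → ℤ) I).submatrix Fin.succ c.succAbove
              = minorMat b (fun i => I (c.succAbove i)) := by
            ext x y; simp [minorMat]
          rw [h3]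
          have h4 : |(((minorMat b (fun i => I (c.succAbove i))).det : ℤ) : ℝ)| ≤ minorMax b := by
            rw [← Int.cast_abs, ← Nat.cast_natAbs]
            exact_mod_cast le_minorMax b _
          gcongr
      _ = _ := by simp; ring
  obtain ⟨I, _, hIe⟩ | h := (Finset.univ : Finset (Fin (j + 1) → Fin k)).eq_empty_or_nonempty.symm.imp_left
    (fun h => Finset.exists_mem_eq_sup _ h
      (fun I => (minorMat (Fin.cons v b : Fin (j + 1) → Fin k → ℤ) I).det.natAbs))
  · rw [minorMax, hIe]; exact hI I
  · rw [minorMax, h]; simp; positivity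

lemma exists_minor_ne_zero {k : ℕ} : ∀ {j : ℕ} (b : Fin j → Fin k → ℤ), LinearIndependent ℤ b →
    ∃ I, (minorMat b I).det ≠ 0 := by
  intro j
  induction j with
  | zero => intro b _; exact ⟨fun i => i.elim0, by simp⟩
  | succ j ih =>
    intro b hb
    obtain ⟨I, hI⟩ := ih (fun i => b i.succ) (hb.comp _ (Fin.succ_injective j))
    by_contra hcon
    push Not at hcon
    rw [Fintype.linearIndependent_iff] at hb
    have h0 := hb (fun a => (-1) ^ (a : ℕ) * (minorMat (fun i => b (a.succAbove i)) I).det) (by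
      ext i
      have h := hcon (Fin.cons i I)
      rw [Matrix.det_succ_column_zero] at h
      simp only [Finset.sum_apply, Pi.smul_apply, smul_eq_mul, Pi.zero_apply]
      rw [← h]
      apply Finset.sum_congr rfl
      intro a _
      have h3 : (minorMat b (Fin.cons i I : Fin (j + 1) → Fin k)).submatrix a.succAbove Fin.succ
          = minorMat (fun i => b (a.succAbove i)) I := by
        ext x y; simp [minorMat]
      rw [h3]
      simp [minorMat]
      ring) 0
    simp at h0
    exact hI h0

/-- p-adic pairing -/
noncomputable def pr {k : ℕ} (q : Fin k → ℤ) (Y : Fin k → ℚ_[p]) : ℚ_[p] := ∑ i, (q i : ℚ_[p]) * Y i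

lemma pr_add {k : ℕ} (q q' : Fin k → ℤ) (Y : Fin k → ℚ_[p]) : pr p (q + q') Y = pr p q Y + pr p q' Y := by
  simp [pr, add_mul, Finset.sum_add_distrib]

lemma pr_smul {k : ℕ} (c : ℤ) (q : Fin k → ℤ) (Y : Fin k → ℚ_[p]) : pr p (c • q) Y = c * pr p q Y := by
  simp [pr, Finset.mul_sum, mul_assoc]

lemma pr_sum {k : ℕ} {ι : Type*} (s : Finset ι) (c : ι → ℤ) (b : ι → Fin k → ℤ) (Y : Fin k → ℚ_[p]) :
    pr p (∑ i ∈ s, c i • b i) Y = ∑ i ∈ s, (c i : ℚ_[p]) * pr p (b i) Y := by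
  classical
  induction s using Finset.induction_on with
  | empty => simp [pr]
  | insert a s ha ih => rw [Finset.sum_insert ha, Finset.sum_insert ha, pr_add, pr_smul, ih]

noncomputable def Nb {j k : ℕ} (b : Fin j → Fin k → ℤ) (Y : Fin k → ℚ_[p]) : ℝ :=
  ‖(fun i => pr p (b i) Y : Fin j → ℚ_[p])‖

noncomputable def psiB {j k : ℕ} (t : ℕ) (b : Fin j → Fin k → ℤ) (Y : Fin k → ℚ_[p]) : ℝ :=
  minorMax b * max 1 ((p : ℝ) ^ t * Nb p b Y)

lemma pr_le_Nb {j k : ℕ} (b : Fin j → Fin k → ℤ) (Y : Fin k → ℚ_[p]) (i : Fin j) :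
    ‖pr p (b i) Y‖ ≤ Nb p b Y := norm_le_pi_norm (fun i => pr p (b i) Y : Fin j → ℚ_[p]) i

lemma Nb_nonneg {j k : ℕ} (b : Fin j → Fin k → ℤ) (Y : Fin k → ℚ_[p]) : 0 ≤ Nb p b Y := norm_nonneg _

lemma norm_sum_int_le {j : ℕ} (c : Fin j → ℤ) (y : Fin j → ℚ_[p]) :
    ‖∑ i, (c i : ℚ_[p]) * y i‖ ≤ ‖y‖ := by
  apply IsUltrametricDist.norm_sum_le_of_forall_le_of_nonneg (norm_nonneg _)
  intro i _
  rw [norm_mul]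
  exact (mul_le_of_le_one_left (norm_nonneg _) (Padic.norm_int_le_one _)).trans (norm_le_pi_norm y i)

lemma inv_le_norm_int (e : ℤ) (he : e ≠ 0) : ((e.natAbs : ℕ) : ℝ)⁻¹ ≤ ‖(e : ℚ_[p])‖ := by
  have h1 : ¬ ‖(e : ℚ_[p])‖ < ((e.natAbs : ℕ) : ℝ)⁻¹ := by
    intro h
    have hne : (e : ℚ_[p]) ≠ 0 := by exact_mod_cast he
    have hv := Padic.norm_eq_zpow_neg_valuation hne
    have hnn : 0 ≤ (e : ℚ_[p]).valuation := by
      rw [Padic.valuation_intCast]; positivity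
    obtain ⟨n, hn⟩ := Int.eq_ofNat_of_zero_le hnn
    rw [hn] at hv
    have hd : ((p : ℤ) ^ n) ∣ e := by
      rw [← Padic.norm_int_le_pow_iff_dvd, hv]
    have hd2 : p ^ n ∣ e.natAbs := by
      have := Int.natAbs_dvd_natAbs.2 hd
      simpa [Int.natAbs_pow] using this
    have hle := Nat.le_of_dvd (Int.natAbs_pos.2 he) hd2
    have hle' : (p : ℝ) ^ n ≤ (e.natAbs : ℕ) := by exact_mod_cast hle
    rw [hv, zpow_neg, zpow_natCast] at h
    have := inv_anti₀ (by have := p_pos_real p; positivity) hle'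
    linarith
  linarith [not_lt.1 h1]

lemma psiB_mono {j k : ℕ} (t : ℕ) (b b' : Fin j → Fin k → ℤ) (Y : Fin k → ℚ_[p])
    (hb : LinearIndependent ℤ b) (h : ∀ i, b i ∈ Submodule.span ℤ (Set.range b')) :
    psiB p t b' Y ≤ psiB p t b Y := by
  have h1 : ∀ i, ∃ c : Fin j → ℤ, ∑ l, c l • b' l = b i := fun i =>
    (Submodule.mem_span_range_iff_exists_fun ℤ).1 (h i)
  choose T hT using h1
  have hT' : ∀ i, b i = ∑ l, (Matrix.of T) i l • b' l := fun i => (hT i).symm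
  set e := (Matrix.of T).det with he
  have he0 : e ≠ 0 := by
    intro h0
    obtain ⟨c, hc, hc2⟩ := Matrix.exists_vecMul_eq_zero_iff.2 h0
    rw [Fintype.linearIndependent_iff] at hb
    apply hc
    ext i
    apply hb c
    simp_rw [hT', Finset.smul_sum, smul_smul]
    rw [Finset.sum_comm]
    simp_rw [← Finset.sum_smul]
    apply Finset.sum_eq_zero
    intro l _
    have := congrFun hc2 l
    simp only [Matrix.vecMul, dotProduct, Pi.zero_apply] at this
    rw [this, zero_smul]
  have h2 := minorMax_trans b b' _ hT'
  have h3 : ∀ l, e • b' l = ∑ i, (Matrix.of T).adjugate l i • b i := by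
    intro l
    simp_rw [hT', Finset.smul_sum, smul_smul]
    rw [Finset.sum_comm]
    simp_rw [← Finset.sum_smul, ← Matrix.mul_apply, Matrix.adjugate_mul]
    simp [Matrix.one_apply, he]
  have h4 : Nb p b' Y ≤ e.natAbs * Nb p b Y := by
    rw [Nb, pi_norm_le_iff_of_nonneg (mul_nonneg (by positivity) (Nb_nonneg p b Y))]
    intro l
    have h5 : ‖(e : ℚ_[p])‖ * ‖pr p (b' l) Y‖ ≤ Nb p b Y := by
      rw [← norm_mul, ← pr_smul, h3, pr_sum]
      exact norm_sum_int_le p _ _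
    have h6 := inv_le_norm_int p e he0
    have hepos : (0 : ℝ) < (e.natAbs : ℕ) := by exact_mod_cast Int.natAbs_pos.2 he0
    have h7 := (mul_le_mul_of_nonneg_right h6 (norm_nonneg (pr p (b' l) Y))).trans h5
    rwa [inv_mul_le_iff₀ hepos] at h7
  have he1 : (1 : ℝ) ≤ (e.natAbs : ℕ) := by exact_mod_cast Int.natAbs_pos.2 he0
  have hpp := p_pos_real p
  calc psiB p t b' Y ≤ minorMax b' * (e.natAbs * max 1 ((p : ℝ) ^ t * Nb p b Y)) := by
        unfold psiB
        gcongr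
        apply max_le
        · exact one_le_mul_of_one_le_of_one_le he1 (le_max_left _ _)
        · calc (p : ℝ) ^ t * Nb p b' Y ≤ (p : ℝ) ^ t * (e.natAbs * Nb p b Y) := by gcongr
            _ = e.natAbs * ((p : ℝ) ^ t * Nb p b Y) := by ring
            _ ≤ _ := by gcongr; exact le_max_right _ _
    _ = ((e.natAbs * minorMax b' : ℕ) : ℝ) * max 1 ((p : ℝ) ^ t * Nb p b Y) := by push_cast; ring
    _ ≤ _ := by
      unfold psiB
      have : ((e.natAbs * minorMax b' : ℕ) : ℝ) ≤ minorMax b := by exact_mod_cast h2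
      gcongr

lemma psiB_cons {j k : ℕ} (t : ℕ) (v : Fin k → ℤ) (b : Fin j → Fin k → ℤ) (Y : Fin k → ℚ_[p])
    (hv : (p : ℝ) ^ t * ‖pr p v Y‖ ≤ 1) :
    psiB p t (Fin.cons v b : Fin (j + 1) → Fin k → ℤ) Y ≤ (j + 1) * ‖v‖ * psiB p t b Y := by
  have hpp := p_pos_real p
  have h2 : (p : ℝ) ^ t * Nb p (Fin.cons v b : Fin (j + 1) → Fin k → ℤ) Y
      ≤ max 1 ((p : ℝ) ^ t * Nb p b Y) := by
    rw [← le_div_iff₀' (by positivity), Nb, pi_norm_le_iff_of_nonneg (by positivity)]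
    intro i
    rw [le_div_iff₀' (by positivity)]
    refine Fin.cases ?_ (fun i => ?_) i
    · exact le_max_of_le_left (by simpa using hv)
    · apply le_max_of_le_right
      simp only [Fin.cons_succ]
      gcongr
      exact pr_le_Nb p b Y i
  calc psiB p t (Fin.cons v b : Fin (j + 1) → Fin k → ℤ) Y
      ≤ ((j + 1) * ‖v‖ * minorMax b) * max 1 ((p : ℝ) ^ t * Nb p b Y) := by
        unfold psiB
        apply mul_le_mul (minorMax_cons v b) (max_le (le_max_left _ _) h2) (by positivity) (by positivity)
    _ = _ := by unfold psiB; ring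

lemma psiB_loc {j k : ℕ} (t : ℕ) (b : Fin j → Fin k → ℤ) (Y Y' : Fin k → ℚ_[p])
    (h : ∀ i, (p : ℝ) ^ t * ‖pr p (b i) Y - pr p (b i) Y'‖ ≤ 1) : psiB p t b Y ≤ psiB p t b Y' := by
  have hpp := p_pos_real p
  unfold psiB
  refine mul_le_mul_of_nonneg_left (max_le (le_max_left _ _) ?_) (by positivity)
  rw [← le_div_iff₀' (by positivity), Nb, pi_norm_le_iff_of_nonneg (by positivity)]
  intro i
  rw [le_div_iff₀' (by positivity)]
  have h1 : ‖pr p (b i) Y‖ ≤ max ‖pr p (b i) Y - pr p (b i) Y'‖ ‖pr p (b i) Y'‖ := by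
    have := IsUltrametricDist.norm_add_le_max (pr p (b i) Y - pr p (b i) Y') (pr p (b i) Y')
    simpa using this
  rcases le_max_iff.1 h1 with h2 | h2
  · exact le_max_of_le_left (le_trans (by gcongr) (h i))
  · apply le_max_of_le_right
    gcongr
    exact h2.trans (pr_le_Nb p b Y' i)

end


section

section lattices
variable {k : ℕ}

def Sat (G : Submodule ℤ (Fin k → ℤ)) : Prop := ∀ m : ℤ, m ≠ 0 → ∀ v, m • v ∈ G → v ∈ G

noncomputable def rk (G : Submodule ℤ (Fin k → ℤ)) : ℕ := Module.finrank ℤ G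

noncomputable def bas (G : Submodule ℤ (Fin k → ℤ)) : Fin (rk G) → Fin k → ℤ :=
  fun i => ((Module.finBasis ℤ G i : G) : Fin k → ℤ)

lemma bas_li (G : Submodule ℤ (Fin k → ℤ)) : LinearIndependent ℤ (bas G) :=
  (Module.finBasis ℤ G).linearIndependent.map' G.subtype (Submodule.ker_subtype G)

lemma bas_mem (G : Submodule ℤ (Fin k → ℤ)) (i) : bas G i ∈ G := (Module.finBasis ℤ G i).2

lemma bas_span (G : Submodule ℤ (Fin k → ℤ)) : Submodule.span ℤ (Set.range (bas G)) = G := by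
  have : Set.range (bas G) = G.subtype '' Set.range (Module.finBasis ℤ G) := by
    rw [← Set.range_comp]; rfl
  rw [this, ← Submodule.map_span, (Module.finBasis ℤ G).span_eq]
  simp

lemma li_card_le_rk {j : ℕ} (G : Submodule ℤ (Fin k → ℤ)) (b : Fin j → Fin k → ℤ)
    (hb : LinearIndependent ℤ b) (h : ∀ i, b i ∈ G) : j ≤ rk G := by
  have h1 : LinearIndependent ℤ (fun i => (⟨b i, h i⟩ : G)) := by
    apply LinearIndependent.of_comp G.subtype
    exact hb
  simpa [rk] using h1.fintype_card_le_finrank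

lemma rk_mono {G G' : Submodule ℤ (Fin k → ℤ)} (h : G ≤ G') : rk G ≤ rk G' :=
  li_card_le_rk G' (bas G) (bas_li G) (fun i => h (bas_mem G i))

lemma rk_le (G : Submodule ℤ (Fin k → ℤ)) : rk G ≤ k := by
  have h1 := rk_mono (le_top : G ≤ ⊤)
  have : rk (⊤ : Submodule ℤ (Fin k → ℤ)) = k := by simp [rk]
  omega

lemma cons_li (G : Submodule ℤ (Fin k → ℤ)) (hG : Sat G) (v : Fin k → ℤ) (hv : v ∉ G) :
    LinearIndependent ℤ (Fin.cons v (bas G) : Fin (rk G + 1) → Fin k → ℤ) := by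
  rw [Fintype.linearIndependent_iff]
  intro g hg
  rw [Fin.sum_univ_succ] at hg
  simp only [Fin.cons_zero, Fin.cons_succ] at hg
  have h0 : g 0 = 0 := by
    by_contra h0
    apply hv
    apply hG _ h0
    rw [eq_neg_of_add_eq_zero_left hg]
    exact G.neg_mem (G.sum_mem fun i _ => G.smul_mem _ (bas_mem G i))
  rw [h0, zero_smul, zero_add] at hg
  have h1 := Fintype.linearIndependent_iff.1 (bas_li G) _ hg
  intro i
  exact Fin.cases h0 h1 i

lemma rk_lt {G G' : Submodule ℤ (Fin k → ℤ)} (hG : Sat G) (h : G < G') : rk G < rk G' := by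
  obtain ⟨hle, v, hv, hv'⟩ := SetLike.lt_iff_le_and_exists.1 h
  exact li_card_le_rk G' _ (cons_li G hG v hv') (fun i => by
    refine Fin.cases hv (fun i => hle ?_) i
    simpa using bas_mem G i)

def satC (H : Submodule ℤ (Fin k → ℤ)) : Submodule ℤ (Fin k → ℤ) where
  carrier := {w | ∃ m : ℤ, m ≠ 0 ∧ m • w ∈ H}
  zero_mem' := ⟨1, one_ne_zero, by simp⟩
  add_mem' := by
    rintro a b ⟨m, hm, hma⟩ ⟨m', hm', hmb⟩
    refine ⟨m * m', mul_ne_zero hm hm', ?_⟩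
    rw [smul_add]
    apply H.add_mem
    · rw [mul_comm, mul_smul]; exact H.smul_mem _ hma
    · rw [mul_smul]; exact H.smul_mem _ hmb
  smul_mem' := by
    rintro c a ⟨m, hm, hma⟩
    refine ⟨m, hm, ?_⟩
    rw [smul_comm]; exact H.smul_mem _ hma

lemma satC_sat (H : Submodule ℤ (Fin k → ℤ)) : Sat (satC H) := by
  rintro m hm v ⟨m', hm', h⟩
  exact ⟨m' * m, mul_ne_zero hm' hm, by rwa [mul_smul]⟩

lemma le_satC (H : Submodule ℤ (Fin k → ℤ)) : H ≤ satC H := fun v hv => ⟨1, one_ne_zero, by simpa⟩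

lemma satC_le {H G : Submodule ℤ (Fin k → ℤ)} (hG : Sat G) (h : H ≤ G) : satC H ≤ G := by
  rintro v ⟨m, hm, hv⟩
  exact hG m hm v (h hv)

lemma rk_satC (H : Submodule ℤ (Fin k → ℤ)) : rk (satC H) = rk H := by
  apply le_antisymm _ (rk_mono (le_satC H))
  have h1 : ∀ i, ∃ m : ℤ, m ≠ 0 ∧ m • bas (satC H) i ∈ H := fun i => bas_mem (satC H) i
  choose m hm hmem using h1
  refine li_card_le_rk H (fun i => m i • bas (satC H) i) ?_ hmem
  rw [Fintype.linearIndependent_iff]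
  intro g hg i
  simp_rw [smul_smul] at hg
  have := Fintype.linearIndependent_iff.1 (bas_li (satC H)) _ hg i
  exact (mul_eq_zero.1 this).resolve_right (hm i)

/-- saturated closure of `G + ℤ v` -/
noncomputable def extS (G : Submodule ℤ (Fin k → ℤ)) (v : Fin k → ℤ) : Submodule ℤ (Fin k → ℤ) :=
  satC (Submodule.span ℤ (Set.range (Fin.cons v (bas G) : Fin (rk G + 1) → Fin k → ℤ)))

lemma cons_mem_extS (G : Submodule ℤ (Fin k → ℤ)) (v : Fin k → ℤ) (i) :
    (Fin.cons v (bas G) : Fin (rk G + 1) → Fin k → ℤ) i ∈ extS G v :=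
  le_satC _ (Submodule.subset_span ⟨i, rfl⟩)

lemma mem_extS (G : Submodule ℤ (Fin k → ℤ)) (v : Fin k → ℤ) : v ∈ extS G v := by
  simpa using cons_mem_extS G v 0

lemma le_extS (G : Submodule ℤ (Fin k → ℤ)) (v : Fin k → ℤ) : G ≤ extS G v := by
  conv_lhs => rw [← bas_span G]
  rw [Submodule.span_le]
  rintro _ ⟨i, rfl⟩
  simpa using cons_mem_extS G v i.succ

lemma extS_le {G G' : Submodule ℤ (Fin k → ℤ)} (v : Fin k → ℤ) (hG' : Sat G') (h : G ≤ G')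
    (hv : v ∈ G') : extS G v ≤ G' := by
  apply satC_le hG'
  rw [Submodule.span_le]
  rintro _ ⟨i, rfl⟩
  refine Fin.cases ?_ (fun i => ?_) i
  · simpa using hv
  · simpa using h (bas_mem G i)

lemma rk_extS (G : Submodule ℤ (Fin k → ℤ)) (hG : Sat G) (v : Fin k → ℤ) (hv : v ∉ G) :
    rk (extS G v) = rk G + 1 := by
  rw [extS, rk_satC, rk, finrank_span_eq_card (cons_li G hG v hv)]
  simp

noncomputable def psi (t : ℕ) (G : Submodule ℤ (Fin k → ℤ)) (Y : Fin k → ℚ_[p]) : ℝ :=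
  psiB p t (bas G) Y

lemma psi_le_of (t : ℕ) (G : Submodule ℤ (Fin k → ℤ)) (Y : Fin k → ℚ_[p]) {j : ℕ} (hj : j = rk G)
    (b : Fin j → Fin k → ℤ) (hb : LinearIndependent ℤ b) (h : ∀ i, b i ∈ G) :
    psi p t G Y ≤ psiB p t b Y := by
  subst hj
  apply psiB_mono p t b (bas G) Y hb
  intro i
  rw [bas_span]; exact h i

lemma psi_extS (t : ℕ) (G : Submodule ℤ (Fin k → ℤ)) (hG : Sat G) (v : Fin k → ℤ) (hv : v ∉ G)
    (Y : Fin k → ℚ_[p]) (hvY : (p : ℝ) ^ t * ‖pr p v Y‖ ≤ 1) :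
    psi p t (extS G v) Y ≤ k * ‖v‖ * psi p t G Y := by
  refine (psi_le_of p t _ Y (rk_extS G hG v hv).symm _ (cons_li G hG v hv) (cons_mem_extS G v)).trans ?_
  refine (psiB_cons p t v (bas G) Y hvY).trans ?_
  have h1 : (((rk G : ℕ) : ℝ) + 1) ≤ k := by
    have := rk_le (extS G v)
    rw [rk_extS G hG v hv] at this
    exact_mod_cast this
  have h2 : 0 ≤ psiB p t (bas G) Y := by unfold psiB; positivity
  unfold psi
  gcongr

lemma psi_bot (t : ℕ) (Y : Fin k → ℚ_[p]) : psi p t ⊥ Y ≤ 1 := by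
  have h0 : rk (⊥ : Submodule ℤ (Fin k → ℤ)) = 0 := by simp [rk]
  refine (psi_le_of p t ⊥ Y h0.symm (fun i => i.elim0) linearIndependent_empty_type (fun i => i.elim0)).trans ?_
  unfold psiB
  have h1 : Nb p (fun i : Fin 0 => (i.elim0 : Fin k → ℤ)) Y = 0 := by
    unfold Nb
    rw [norm_eq_zero]
    exact Subsingleton.elim _ _
  have h2 : minorMax (fun i : Fin 0 => (i.elim0 : Fin k → ℤ)) ≤ 1 := by
    apply Finset.sup_le
    intro I _
    simp
  rw [h1]
  simp
  exact_mod_cast h2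
end lattices

end


section

lemma index_vecMul {j : ℕ} (B : Matrix (Fin j) (Fin j) ℤ) (hB : B.det ≠ 0) :
    Function.Injective B.vecMulLinear.toAddMonoidHom ∧
    (B.vecMulLinear.toAddMonoidHom.range).index = B.det.natAbs := by
  have hinj : Function.Injective B.vecMulLinear := by
    rw [← LinearMap.ker_eq_bot, LinearMap.ker_eq_bot']
    intro c hc
    by_contra h0
    exact hB (Matrix.exists_vecMul_eq_zero_iff.1 ⟨c, h0, hc⟩)
  refine ⟨hinj, ?_⟩
  have h := Submodule.natAbs_det_basis_change (Pi.basisFun ℤ (Fin j)) (LinearMap.range B.vecMulLinear)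
    ((Pi.basisFun ℤ (Fin j)).map (LinearEquiv.ofInjective B.vecMulLinear hinj))
  have h2 : B = fun i => B.vecMulLinear (Pi.basisFun ℤ (Fin j) i) := by
    ext i l
    simp [Pi.basisFun_apply]
  have h3 : (Pi.basisFun ℤ (Fin j)).det (((↑) : LinearMap.range B.vecMulLinear → Fin j → ℤ) ∘
      ((Pi.basisFun ℤ (Fin j)).map (LinearEquiv.ofInjective B.vecMulLinear hinj))) = B.det := by
    rw [Pi.basisFun_det]
    conv_rhs => rw [h2]
    rfl
  rw [h3] at h
  rw [h]
  rfl

lemma exists_pow_max {j : ℕ} (t : ℕ) (y : Fin j → ℚ_[p]) :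
    ∃ e : ℕ, max 1 ((p : ℝ) ^ t * ‖y‖) = (p : ℝ) ^ e := by
  by_cases h : (p : ℝ) ^ t * ‖y‖ ≤ 1
  · exact ⟨0, by simp [h]⟩
  · push Not at h
    rw [max_eq_right h.le]
    have hne : (Finset.univ : Finset (Fin j)).Nonempty := by
      by_contra hne
      rw [Finset.not_nonempty_iff_eq_empty, Finset.univ_eq_empty_iff] at hne
      have : y = 0 := Subsingleton.elim _ _
      rw [this, norm_zero, mul_zero] at h
      linarith
    obtain ⟨i, -, hi⟩ := Finset.exists_max_image Finset.univ (fun i => ‖y i‖) hne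
    have hy : ‖y‖ = ‖y i‖ := le_antisymm
      ((pi_norm_le_iff_of_nonneg (norm_nonneg _)).2 fun l => hi l (Finset.mem_univ _)) (norm_le_pi_norm y i)
    have h0 : y i ≠ 0 := by
      intro h0
      rw [hy, h0, norm_zero, mul_zero] at h
      linarith
    rw [hy, Padic.norm_eq_zpow_neg_valuation h0] at h ⊢
    have hp0 : (p : ℝ) ≠ 0 := (p_pos_real p).ne'
    rw [← zpow_natCast, ← zpow_add₀ hp0] at h ⊢
    have h1 : 0 < (t : ℤ) + -(y i).valuation := by
      by_contra hc
      push Not at hc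
      have := zpow_le_one_of_nonpos₀ (one_lt_p_real p).le hc
      linarith
    obtain ⟨e, he⟩ := Int.eq_ofNat_of_zero_le h1.le
    exact ⟨e, by rw [he, zpow_natCast]⟩

lemma index_K {j : ℕ} (t e : ℕ) (y : Fin j → ℚ_[p]) (he : (p : ℝ) ^ t * ‖y‖ ≤ (p : ℝ) ^ e) :
    ∃ K : AddSubgroup (Fin j → ℤ), K.index ≠ 0 ∧ K.index ≤ p ^ e ∧
      ∀ c ∈ K, (p : ℝ) ^ t * ‖∑ i, (c i : ℚ_[p]) * y i‖ ≤ 1 := by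
  have hpp := p_pos_real p
  have hp0 : (p : ℝ) ≠ 0 := hpp.ne'
  have hnp : ‖((p : ℚ_[p]) ^ ((e : ℤ) - t))‖ = (p : ℝ) ^ t * ((p : ℝ) ^ e)⁻¹ := by
    rw [Padic.norm_p_zpow, neg_sub, zpow_sub₀ hp0]
    simp [div_eq_mul_inv]
  have hz : ∀ i, ‖y i * (p : ℚ_[p]) ^ ((e : ℤ) - t)‖ ≤ 1 := by
    intro i
    rw [norm_mul, hnp]
    have h1 : (p : ℝ) ^ t * ‖y i‖ ≤ (p : ℝ) ^ e :=
      le_trans (by gcongr; exact norm_le_pi_norm y i) he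
    calc ‖y i‖ * ((p : ℝ) ^ t * ((p : ℝ) ^ e)⁻¹) = ((p : ℝ) ^ t * ‖y i‖) * ((p : ℝ) ^ e)⁻¹ := by ring
      _ ≤ (p : ℝ) ^ e * ((p : ℝ) ^ e)⁻¹ := by gcongr
      _ = 1 := mul_inv_cancel₀ (by positivity)
  let z : Fin j → ℤ_[p] := fun i => ⟨y i * (p : ℚ_[p]) ^ ((e : ℤ) - t), hz i⟩
  let φ : (Fin j → ℤ) →+ ZMod (p ^ e) :=
    { toFun := fun c => PadicInt.toZModPow e (∑ i, (c i : ℤ_[p]) * z i)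
      map_zero' := by simp
      map_add' := by
        intro a b
        rw [← map_add, ← Finset.sum_add_distrib]
        simp [add_mul] }
  have : NeZero (p ^ e) := ⟨pow_ne_zero _ (Fact.out : p.Prime).ne_zero⟩
  refine ⟨φ.ker, ?_, ?_, ?_⟩
  · rw [AddSubgroup.index_ker]
    exact Nat.card_pos.ne'
  · rw [AddSubgroup.index_ker]
    calc _ ≤ Nat.card (ZMod (p ^ e)) := Nat.card_le_card_of_injective _ Subtype.val_injective
      _ = p ^ e := by simp
  · intro c hc
    have h1 : PadicInt.toZModPow e (∑ i, (c i : ℤ_[p]) * z i) = 0 := hc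
    rw [← RingHom.mem_ker, PadicInt.ker_toZModPow, ← PadicInt.norm_le_pow_iff_mem_span_pow] at h1
    have h2 : ((∑ i, (c i : ℤ_[p]) * z i : ℤ_[p]) : ℚ_[p])
        = (∑ i, (c i : ℚ_[p]) * y i) * (p : ℚ_[p]) ^ ((e : ℤ) - t) := by
      rw [Finset.sum_mul]
      change PadicInt.Coe.ringHom _ = _
      rw [map_sum]
      apply Finset.sum_congr rfl
      intro i _
      rw [map_mul, map_intCast, mul_assoc]
      rfl
    rw [PadicInt.norm_def, h2, norm_mul, hnp, zpow_neg, zpow_natCast] at h1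
    have h3 : (0 : ℝ) < (p : ℝ) ^ e := by positivity
    rw [← mul_assoc, mul_le_iff_le_one_left (by positivity)] at h1
    linarith

lemma mink {j k : ℕ} (t : ℕ) (b : Fin j → Fin k → ℤ) (hb : LinearIndependent ℤ b)
    (Y : Fin k → ℚ_[p]) (R : ℕ) (hR : psiB p t b Y < ((R : ℝ) + 1) ^ j) :
    ∃ q ∈ Submodule.span ℤ (Set.range b), q ≠ 0 ∧ (p : ℝ) ^ t * ‖pr p q Y‖ ≤ 1 ∧ ‖q‖ ≤ j * R := by
  obtain ⟨I0, hI0⟩ := exists_minor_ne_zero b hb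
  obtain ⟨I, -, hI⟩ := Finset.exists_mem_eq_sup Finset.univ ⟨I0, Finset.mem_univ _⟩
      (fun I : Fin j → Fin k => (minorMat b I).det.natAbs)
  change minorMax b = _ at hI
  set B := minorMat b I with hBdef
  have hB : B.det ≠ 0 := by
    have h1 := le_minorMax b I0
    rw [hI] at h1
    have h2 := Int.natAbs_pos.2 hI0
    exact Int.natAbs_pos.1 (by omega)
  obtain ⟨hinj, hind⟩ := index_vecMul B hB
  obtain ⟨e, he⟩ := exists_pow_max p t (fun i => pr p (b i) Y)
  obtain ⟨K, hK0, hKe, hK⟩ := index_K p t e (fun i => pr p (b i) Y) (he ▸ le_max_right _ _)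
  set L := K.map B.vecMulLinear.toAddMonoidHom with hL
  have hLi : L.index = K.index * B.det.natAbs := by
    rw [hL, AddSubgroup.index_map_of_injective _ hinj, hind]
  have hL0 : L.index ≠ 0 := by
    rw [hLi]; exact mul_ne_zero hK0 (Int.natAbs_pos.2 hB).ne'
  have hLlt : L.index < (R + 1) ^ j := by
    have h1 : (L.index : ℝ) ≤ psiB p t b Y := by
      rw [psiB, hI, Nb, he, hLi]
      push_cast
      rw [mul_comm]
      have : ((K.index : ℕ) : ℝ) ≤ (p : ℝ) ^ e := by exact_mod_cast hKe
      gcongr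
    have h2 := h1.trans_lt hR
    exact_mod_cast h2
  have : L.FiniteIndex := ⟨hL0⟩
  have : Finite ((Fin j → ℤ) ⧸ L) := L.finite_quotient_of_finiteIndex
  letI := Fintype.ofFinite ((Fin j → ℤ) ⧸ L)
  obtain ⟨x, x', hxx, hx⟩ := Fintype.exists_ne_map_eq_of_card_lt
    (fun x : Fin j → Fin (R + 1) => (QuotientAddGroup.mk (fun i => ((x i : ℕ) : ℤ)) : (Fin j → ℤ) ⧸ L))
    (by
      have : Fintype.card ((Fin j → ℤ) ⧸ L) = L.index := by
        rw [← Nat.card_eq_fintype_card]; rfl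
      rw [this]; simpa using hLlt)
  rw [QuotientAddGroup.eq] at hx
  obtain ⟨c, hc, hcx⟩ := hx
  set w : Fin j → ℤ := -(fun i => ((x i : ℕ) : ℤ)) + fun i => ((x' i : ℕ) : ℤ) with hw
  have hcw : Matrix.vecMul c B = w := hcx
  have hw0 : w ≠ 0 := by
    intro h0
    apply hxx
    ext i
    have := congrFun h0 i
    simp [hw] at this
    omega
  have hwR : ∀ i, |w i| ≤ R := by
    intro i
    have h1 := (x i).2
    have h2 := (x' i).2
    simp only [hw, Pi.add_apply, Pi.neg_apply]
    rw [abs_le]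
    omega
  have hq : ∀ l, (∑ i, c i • b i) l = ∑ i, c i * b i l := by
    intro l; simp
  refine ⟨∑ i, c i • b i, ?_, ?_, ?_, ?_⟩
  · exact Submodule.sum_mem _ fun i _ => Submodule.smul_mem _ _ (Submodule.subset_span ⟨i, rfl⟩)
  · intro h0
    apply hw0
    ext i
    have := congrFun h0 (I i)
    rw [hq] at this
    rw [← hcw]
    simpa [Matrix.vecMul, dotProduct, hBdef, minorMat] using this
  · rw [pr_sum]; exact hK c hc
  · rw [pi_norm_le_iff_of_nonneg (by positivity)]
    intro l
    have h1 : B.det * (∑ i, c i * b i l) = ∑ m, w m * (minorMat b (Function.update I m l)).det := by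
      have h2 : ∀ m, (minorMat b (Function.update I m l)).det = (B.adjugate.mulVec (fun i => b i l)) m := by
        intro m
        rw [← Matrix.cramer_eq_adjugate_mulVec, Matrix.cramer_apply]
        congr 1
        ext u v
        by_cases hv : v = m
        · subst hv; simp [minorMat]
        · simp [minorMat, hv, hBdef]
      simp_rw [h2]
      change _ = dotProduct w (B.adjugate.mulVec (fun i => b i l))
      rw [← hcw, Matrix.dotProduct_mulVec, Matrix.vecMul_vecMul, Matrix.mul_adjugate,
        ← Matrix.dotProduct_mulVec, Matrix.smul_mulVec, Matrix.one_mulVec]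
      simp only [dotProduct, Pi.smul_apply, smul_eq_mul, Finset.mul_sum]
      exact Finset.sum_congr rfl fun i _ => by ring
    have h3 : |B.det| * |∑ i, c i * b i l| ≤ |B.det| * (j * R) := by
      rw [← abs_mul, h1]
      refine (Finset.abs_sum_le_sum_abs _ _).trans ?_
      calc _ ≤ ∑ m : Fin j, (R : ℤ) * |B.det| := by
            apply Finset.sum_le_sum
            intro m _
            rw [abs_mul]
            have h4 : |(minorMat b (Function.update I m l)).det| ≤ |B.det| := by
              have := le_minorMax b (Function.update I m l)
              rw [hI] at this
              rw [Int.abs_eq_natAbs, Int.abs_eq_natAbs]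
              exact_mod_cast this
            have := hwR m
            gcongr
        _ = _ := by simp; ring
    have h5 := le_of_mul_le_mul_left h3 (abs_pos.2 hB)
    rw [hq, Int.norm_eq_abs]
    exact_mod_cast h5

end


section

section theoremQ
variable {k : ℕ}

lemma rho_le_psi (t : ℕ) (G : Submodule ℤ (Fin k → ℤ)) (Y : Fin k → ℚ_[p]) (ρ : ℝ) (hρ : 0 < ρ)
    (h : ∀ q : Fin k → ℤ, q ≠ 0 → (p : ℝ) ^ t * ‖pr p q Y‖ ≤ 1 → k * ρ ≤ ‖q‖) :
    ρ ^ (rk G) ≤ psi p t G Y := by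
  by_contra hc
  push Not at hc
  have hceil : 0 < ⌈ρ⌉₊ := Nat.ceil_pos.2 hρ
  obtain ⟨R, hR⟩ : ∃ R, ⌈ρ⌉₊ = R + 1 := ⟨⌈ρ⌉₊ - 1, by omega⟩
  have h1 : ρ ≤ (R : ℝ) + 1 := by
    have := Nat.le_ceil ρ
    rw [hR] at this; exact_mod_cast this
  have h2 : (R : ℝ) < ρ := by
    have := Nat.ceil_lt_add_one hρ.le
    rw [hR] at this; push_cast at this; linarith
  obtain ⟨q, -, hq0, hq, hqR⟩ := mink p t (bas G) (bas_li G) Y R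
    (hc.trans_le (pow_le_pow_left₀ hρ.le h1 _))
  have h3 := h q hq0 hq
  have hk : 0 < k := by
    rcases Nat.eq_zero_or_pos k with h0 | h0
    · subst h0; exact absurd (Subsingleton.elim _ _) hq0
    · exact h0
  have hk' : (0 : ℝ) < k := by exact_mod_cast hk
  have h4 : ((rk G : ℕ) : ℝ) ≤ k := by exact_mod_cast rk_le G
  have h5 : ((rk G : ℕ) : ℝ) * R ≤ k * R := by gcongr
  have h6 : (k : ℝ) * R < k * ρ := by gcongr
  linarith

lemma sat_bot : Sat (⊥ : Submodule ℤ (Fin k → ℤ)) := by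
  intro m hm w hw
  rw [Submodule.mem_bot] at hw ⊢
  exact (smul_eq_zero.1 hw).resolve_left hm

lemma prot_concl (t : ℕ) (Y : Fin k → ℚ_[p]) (ρ ε : ℝ) (hρ : 0 < ρ) (hε1 : ε ≤ 1)
    (F' : Set {G : Submodule ℤ (Fin k → ℤ) // Sat G ∧ G ≠ ⊥}) (hch : IsChain (· ≤ ·) F')
    (h1 : ∀ G ∈ F', ε * ρ ^ (rk G.1) ≤ psi p t G.1 Y ∧ psi p t G.1 Y < ρ ^ (rk G.1))
    (h2 : ∀ G, G ∉ F' → (∀ G' ∈ F', G ≤ G' ∨ G' ≤ G) → ρ ^ (rk G.1) ≤ psi p t G.1 Y)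
    (v : Fin k → ℤ) (hv0 : v ≠ 0) (hv : (p : ℝ) ^ t * ‖pr p v Y‖ ≤ 1) : ε * ρ ≤ k * ‖v‖ := by
  obtain ⟨W, hWS, hvW, hWpsi, hWm⟩ : ∃ W : Submodule ℤ (Fin k → ℤ), Sat W ∧ v ∉ W ∧
      psi p t W Y ≤ ρ ^ (rk W) ∧ ∀ G' ∈ F', (v ∈ G'.1 → W ≤ G'.1) ∧ (v ∉ G'.1 → G'.1 ≤ W) := by
    by_cases hS : ∃ G ∈ F', v ∉ G.1
    · obtain ⟨G0, hG0, hvG0⟩ := hS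
      have hfin : (((fun G : {G : Submodule ℤ (Fin k → ℤ) // Sat G ∧ G ≠ ⊥} => rk G.1) ''
          {G ∈ F' | v ∉ G.1})).Finite :=
        (Set.finite_Iic k).subset (by rintro _ ⟨G, -, rfl⟩; exact rk_le _)
      obtain ⟨r, hr, hmax⟩ := hfin.exists_maximal ⟨_, G0, ⟨hG0, hvG0⟩, rfl⟩
      obtain ⟨W, ⟨hWF, hvW⟩, rfl⟩ := hr
      refine ⟨W.1, W.2.1, hvW, (h1 W hWF).2.le, ?_⟩
      intro G' hG'
      have hc := hch.total hWF hG'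
      constructor
      · intro hvG'
        rcases hc with h | h
        · exact h
        · exact absurd (h hvG') hvW
      · intro hvG'
        rcases hc with h | h
        · rcases eq_or_lt_of_le (show W.1 ≤ G'.1 from h) with he | hl
          · exact he.ge
          · exfalso
            have ha := rk_lt W.2.1 hl
            have := hmax ⟨G', ⟨hG', hvG'⟩, rfl⟩ ha.le
            exact absurd this (not_le.2 ha)
        · exact h
    · push Not at hS
      refine ⟨⊥, ?_, by simpa using hv0, ?_, ?_⟩
      · exact sat_bot
      · have : rk (⊥ : Submodule ℤ (Fin k → ℤ)) = 0 := by simp [rk]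
        rw [this, pow_zero]; exact psi_bot p t Y
      · intro G' hG'
        exact ⟨fun _ => bot_le, fun h => absurd (hS G' hG') h⟩
  have hHbot : extS W v ≠ ⊥ := by
    intro h
    have := mem_extS W v
    rw [h] at this
    exact hv0 (by simpa using this)
  let H : {G : Submodule ℤ (Fin k → ℤ) // Sat G ∧ G ≠ ⊥} := ⟨extS W v, satC_sat _, hHbot⟩
  have hrk : rk (extS W v) = rk W + 1 := rk_extS W hWS v hvW
  have hup := psi_extS p t W hWS v hvW Y hv
  have hlow : ε * ρ ^ (rk (extS W v)) ≤ psi p t (extS W v) Y := by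
    by_cases hH : H ∈ F'
    · exact (h1 H hH).1
    · have h3 := h2 H hH (by
        intro G' hG'
        by_cases hvG : v ∈ G'.1
        · left
          exact extS_le v G'.2.1 ((hWm G' hG').1 hvG) hvG
        · right
          exact ((hWm G' hG').2 hvG).trans (le_extS W v))
      refine le_trans ?_ h3
      exact mul_le_of_le_one_left (by positivity) hε1
  rw [hrk, pow_succ] at hlow
  have h5 : (k : ℝ) * ‖v‖ * psi p t W Y ≤ k * ‖v‖ * ρ ^ rk W := by gcongr
  have h6 : (ε * ρ) * ρ ^ rk W ≤ (k * ‖v‖) * ρ ^ rk W := by linarith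
  exact le_of_mul_le_mul_right h6 (by positivity)

lemma good_psi (μ : Measure ℚ_[p]) [μ.IsAddHaarMeasure] (Fm : ℚ_[p] → Fin k → ℚ_[p]) (N : ℕ)
    (hN : ∀ c : Fin k → ℚ_[p], ∃ N' ≤ N, GoodF p N' (fun s => ∑ i, c i * Fm s i))
    (t s : ℕ) (G : Submodule ℤ (Fin k → ℤ)) (θ : ℝ) (a : ℚ_[p]) (ha : a ∈ bl p 0 0) (m : ℕ)
    (x1 : ℚ_[p]) (hx1 : x1 ∈ bl p a m) (hθ : θ ≤ psi p t G (Fm x1)) :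
    μ {x ∈ bl p a m | psi p t G (Fm x) < ((p : ℝ) ^ (s * N))⁻¹ * θ} ≤
      (N * ((p : ℝ≥0∞) ^ s)⁻¹) * μ (bl p a m) := by
  have hpp := p_pos_real p
  set ε := ((p : ℝ) ^ (s * N))⁻¹ with hε
  have hε0 : 0 < ε := by positivity
  have hε1 : ε ≤ 1 := inv_le_one_of_one_le₀ (one_le_pow₀ (one_lt_p_real p).le)
  have key : ∀ x, psi p t G (Fm x) < ε * θ →
      max 1 ((p : ℝ) ^ t * Nb p (bas G) (Fm x)) < ε * max 1 ((p : ℝ) ^ t * Nb p (bas G) (Fm x1)) := by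
    intro x hx
    have h1 : psi p t G (Fm x) < ε * psi p t G (Fm x1) := hx.trans_le (by gcongr)
    unfold psi psiB at h1
    have h2 : (minorMax (bas G) : ℝ) * max 1 ((p : ℝ) ^ t * Nb p (bas G) (Fm x)) <
      (minorMax (bas G) : ℝ) * (ε * max 1 ((p : ℝ) ^ t * Nb p (bas G) (Fm x1))) := by
        linarith
    exact lt_of_mul_lt_mul_left h2 (by positivity)
  by_cases hc : (p : ℝ) ^ t * Nb p (bas G) (Fm x1) ≤ 1
  · have : {x ∈ bl p a m | psi p t G (Fm x) < ε * θ} = ∅ := by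
      ext x
      simp only [Set.mem_ofPred_eq, Set.mem_empty_iff_false, iff_false, not_and]
      intro _ hx
      have h1 := key x hx
      rw [max_eq_left hc] at h1
      have := le_max_left 1 ((p : ℝ) ^ t * Nb p (bas G) (Fm x))
      linarith
    rw [this]; simp
  · push Not at hc
    have hne : (Finset.univ : Finset (Fin (rk G))).Nonempty := by
      by_contra hne
      rw [Finset.not_nonempty_iff_eq_empty, Finset.univ_eq_empty_iff] at hne
      have : Nb p (bas G) (Fm x1) = 0 := by
        unfold Nb
        rw [norm_eq_zero]
        exact Subsingleton.elim _ _
      rw [this, mul_zero] at hc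
      linarith
    obtain ⟨i, -, hi⟩ := Finset.exists_max_image Finset.univ (fun i => ‖pr p (bas G i) (Fm x1)‖) hne
    have hy : Nb p (bas G) (Fm x1) = ‖pr p (bas G i) (Fm x1)‖ := le_antisymm
      ((pi_norm_le_iff_of_nonneg (norm_nonneg _)).2 fun l => hi l (Finset.mem_univ _))
      (pr_le_Nb p (bas G) (Fm x1) i)
    obtain ⟨N', hN', hg⟩ := hN (fun l => (bas G i l : ℚ_[p]))
    refine le_trans (measure_mono ?_) (GoodF.measure p μ N N' hN' _ hg a ha m s x1 hx1)
    rintro x ⟨hx, hxl⟩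
    refine ⟨hx, ?_⟩
    have h1 := key x hxl
    rw [max_eq_right hc.le] at h1
    have h2 := (le_max_right _ _).trans_lt h1
    have h3 : (p : ℝ) ^ t * Nb p (bas G) (Fm x) < (p : ℝ) ^ t * (ε * Nb p (bas G) (Fm x1)) := by linarith
    have h4 := lt_of_mul_lt_mul_left h3 (by positivity)
    rw [hy] at h4
    exact (pr_le_Nb p (bas G) (Fm x) i).trans_lt h4

lemma loc_psi (Fm : ℚ_[p] → Fin k → ℚ_[p]) (hF : ContinuousOn Fm (closedBall 0 1)) (t : ℕ) :
    ∃ m0 : ℕ, ∀ G : Submodule ℤ (Fin k → ℤ), ∀ a ∈ bl p 0 0, ∀ x ∈ bl p a m0,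
      psi p t G (Fm x) = psi p t G (Fm a) := by
  have hpp := p_pos_real p
  have huc := (isCompact_closedBall (0 : ℚ_[p]) 1).uniformContinuousOn_of_continuous hF
  rw [Metric.uniformContinuousOn_iff] at huc
  obtain ⟨δ, hδ, h⟩ := huc (((p : ℝ) ^ t)⁻¹) (by positivity)
  obtain ⟨m0, hm0⟩ := exists_pow_lt_of_lt_one hδ (inv_lt_one_of_one_lt₀ (one_lt_p_real p))
  refine ⟨m0, fun G a ha x hx => ?_⟩
  have hb0 : bl p 0 0 = closedBall (0 : ℚ_[p]) 1 := by simp [bl]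
  have hxu : x ∈ bl p 0 0 := by
    have := bl_sub p (s := m0) ha
    rw [zero_add] at this
    exact this hx
  have hd : dist x a < δ := by
    have : dist x a ≤ (p : ℝ) ^ (-(m0 : ℤ)) := hx
    rw [zpow_neg, zpow_natCast, ← inv_pow] at this
    linarith
  have h1 : ‖Fm x - Fm a‖ ≤ ((p : ℝ) ^ t)⁻¹ := by
    rw [← dist_eq_norm]
    exact (h x (hb0 ▸ hxu) a (hb0 ▸ ha) hd).le
  have h2 : ∀ q : Fin k → ℤ, (p : ℝ) ^ t * ‖pr p q (Fm x) - pr p q (Fm a)‖ ≤ 1 := by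
    intro q
    have h3 : pr p q (Fm x) - pr p q (Fm a) = ∑ i, (q i : ℚ_[p]) * (Fm x - Fm a) i := by
      simp [pr, mul_sub, Finset.sum_sub_distrib]
    have h4 := (norm_sum_int_le p q (Fm x - Fm a)).trans h1
    rw [h3]
    calc _ ≤ (p : ℝ) ^ t * ((p : ℝ) ^ t)⁻¹ := by gcongr
      _ = 1 := mul_inv_cancel₀ (by positivity)
  apply le_antisymm
  · exact psiB_loc p t _ _ _ (fun i => h2 _)
  · exact psiB_loc p t _ _ _ (fun i => by rw [norm_sub_rev]; exact h2 _)

theorem thmQ (μ : Measure ℚ_[p]) [μ.IsAddHaarMeasure] (Fm : ℚ_[p] → Fin k → ℚ_[p]) (N : ℕ)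
    (hN : ∀ c : Fin k → ℚ_[p], ∃ N' ≤ N, GoodF p N' (fun s => ∑ i, c i * Fm s i))
    (hF : ContinuousOn Fm (closedBall 0 1)) (t s : ℕ) (ρ : ℝ) (hρ : 0 < ρ)
    (h0 : ∀ q : Fin k → ℤ, q ≠ 0 → (p : ℝ) ^ t * ‖pr p q (Fm 0)‖ ≤ 1 → k * ρ ≤ ‖q‖) :
    μ {x ∈ bl p 0 0 | ∃ q : Fin k → ℤ, q ≠ 0 ∧ (p : ℝ) ^ t * ‖pr p q (Fm x)‖ ≤ 1 ∧
      k * ‖q‖ < ((p : ℝ) ^ (s * N))⁻¹ * ρ} ≤ Kc p (N * ((p : ℝ≥0∞) ^ s)⁻¹) k * μ (bl p 0 0) := by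
  obtain ⟨m0, hm0⟩ := loc_psi p Fm hF t
  set ε := ((p : ℝ) ^ (s * N))⁻¹ with hε
  have hε1 : ε ≤ 1 := inv_le_one_of_one_le₀ (one_le_pow₀ (one_lt_p_real p).le)
  have h := nondiv p μ (P := {G : Submodule ℤ (Fin k → ℤ) // Sat G ∧ G ≠ ⊥}) k (fun G => rk G.1)
    (fun G G' hl => rk_lt G.2.1 hl)
    (fun G => by
      have hl : (⊥ : Submodule ℤ (Fin k → ℤ)) < G.1 := bot_lt_iff_ne_bot.2 G.2.2
      have := rk_lt (G := (⊥ : Submodule ℤ (Fin k → ℤ))) sat_bot hl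
      omega)
    (fun G => rk_le _) (fun G x => psi p t G.1 (Fm x)) (fun G => ρ ^ (rk G.1)) ε
    (N * ((p : ℝ≥0∞) ^ s)⁻¹) m0
    (fun G a ha m x hx hθ => good_psi p μ Fm N hN t s G.1 _ a ha m x hx hθ)
    (fun G a ha x hx => hm0 G.1 a ha x hx)
    k ∅ (by simp) (by simp) m0 0 (by simp) 0 (bl_mem_self p 0 0)
    (fun G _ _ => ⟨0, bl_mem_self p 0 0, rho_le_psi p t G.1 (Fm 0) ρ hρ h0⟩)
  refine le_trans (measure_mono ?_) h
  rintro x ⟨hx, q, hq0, hq, hql⟩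
  refine ⟨hx, ?_⟩
  rintro ⟨F', -, hch, h1, h2⟩
  have := prot_concl p t (Fm x) ρ ε hρ hε1 F' hch (fun G hG => h1 G hG (by simp)) h2 q hq0 hq
  linarith
end theoremQ

end


section

section dioph
open Filter

def NVd {k : ℕ} (δ : ℝ) (Y : Fin k → ℚ_[p]) : Prop :=
  ∀ᶠ t : ℕ in atTop, ∀ q : Fin k → ℤ, q ≠ 0 → (p : ℝ) ^ t * ‖pr p q Y‖ ≤ 1 →
    (p : ℝ) ^ ((t : ℝ) * (1 - δ)) ≤ ‖q‖ ^ k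

def NV {k : ℕ} (Y : Fin k → ℚ_[p]) : Prop := ∀ i : ℕ, NVd p (1 / ((i : ℝ) + 1)) Y

lemma one_le_norm_int {k : ℕ} (q : Fin k → ℤ) (hq : q ≠ 0) : 1 ≤ ‖q‖ := by
  obtain ⟨i, hi⟩ := Function.ne_iff.1 hq
  refine le_trans ?_ (norm_le_pi_norm q i)
  rw [Int.norm_eq_abs]
  exact_mod_cast Int.one_le_abs hi

def cn {n : ℕ} (qq : ℤ × (Fin n → ℤ)) : Fin (n + 1) → ℤ := Fin.cons qq.1 qq.2

noncomputable def Yc {n : ℕ} (y : Fin n → ℚ_[p]) : Fin (n + 1) → ℚ_[p] := Fin.cons 1 y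

lemma cn_inj {n : ℕ} : Function.Injective (cn (n := n)) := by
  rintro ⟨a, b⟩ ⟨a', b'⟩ h
  have := Fin.cons_inj.1 h
  exact Prod.ext this.1 this.2

lemma cn_surj {n : ℕ} (q : Fin (n + 1) → ℤ) : ∃ qq, cn qq = q :=
  ⟨(q 0, Fin.tail q), Fin.cons_self_tail q⟩

lemma pr_cn {n : ℕ} (qq : ℤ × (Fin n → ℤ)) (y : Fin n → ℚ_[p]) :
    pr p (cn qq) (Yc p y) = (qq.1 : ℚ_[p]) + ∑ i, (qq.2 i : ℚ_[p]) * y i := by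
  simp [pr, cn, Yc, Fin.sum_univ_succ]

lemma supNormZ_cn {n : ℕ} (qq : ℤ × (Fin n → ℤ)) : supNormZ qq.1 qq.2 = ‖cn qq‖ := by
  unfold supNormZ
  apply le_antisymm
  · apply max_le
    · have := norm_le_pi_norm (cn qq) 0
      simpa [cn, Int.norm_eq_abs] using this
    · apply Real.iSup_le _ (norm_nonneg _)
      intro i
      have := norm_le_pi_norm (cn qq) i.succ
      simpa [cn, Int.norm_eq_abs] using this
  · rw [pi_norm_le_iff_of_nonneg (le_max_of_le_left (abs_nonneg _))]
    intro i
    refine Fin.cases ?_ (fun i => ?_) i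
    · simp [cn, Int.norm_eq_abs]
    · apply le_max_of_le_right
      simp only [cn, Fin.cons_succ, Int.norm_eq_abs]
      exact le_ciSup (f := fun i => |((qq.2 i : ℤ) : ℝ)|) (Set.finite_range _).bddAbove i

lemma isVWA_iff {n : ℕ} (y : Fin n → ℚ_[p]) : IsVWA p y ↔ ∃ v : ℝ, (n : ℝ) + 1 < v ∧
    {qq : ℤ × (Fin n → ℤ) | ‖pr p (cn qq) (Yc p y)‖ ≤ ‖cn qq‖ ^ (-v)}.Infinite := by
  unfold IsVWA wExp
  simp_rw [pr_cn, ← supNormZ_cn, lt_iSup_iff]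
  have hn : (0 : ℝ) ≤ (n : ℝ) + 1 := by positivity
  constructor
  · rintro ⟨v, ⟨hv, hinf⟩, hl⟩
    exact ⟨v, (ENNReal.ofReal_lt_ofReal_iff hv).1 hl, hinf⟩
  · rintro ⟨v, hl, hinf⟩
    have hv : 0 < v := hn.trans_lt hl
    exact ⟨v, ⟨hv, hinf⟩, (ENNReal.ofReal_lt_ofReal_iff hv).2 hl⟩

lemma NV_of_not_VWA {n : ℕ} (y : Fin n → ℚ_[p]) (h : ¬ IsVWA p y) : NV p (Yc p y) := by
  intro i
  by_contra hcon
  apply h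
  rw [isVWA_iff]
  set δ : ℝ := 1 / ((i : ℝ) + 1) with hδ
  have hδ0 : 0 < δ := by positivity
  have hpp := p_pos_real p
  refine ⟨((n : ℝ) + 1) * (1 + δ), by nlinarith [(Nat.cast_nonneg n : (0 : ℝ) ≤ n)], ?_⟩
  set v := ((n : ℝ) + 1) * (1 + δ) with hv
  intro hfin
  set S := {qq : ℤ × (Fin n → ℤ) | ‖pr p (cn qq) (Yc p y)‖ ≤ ‖cn qq‖ ^ (-v)} with hS
  have hne : ∀ qq ∈ S, cn qq ≠ 0 → pr p (cn qq) (Yc p y) ≠ 0 := by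
    intro qq _ hq0 hpr
    apply Set.infinite_of_injective_forall_mem (f := fun m : ℕ => (m : ℤ) • qq) _ _ hfin
    · intro m m' hm
      have hq : qq ≠ 0 := by
        rintro rfl
        apply hq0
        ext j
        refine Fin.cases rfl (fun j => rfl) j
      have := smul_left_injective ℤ hq hm
      exact_mod_cast this
    · intro m
      have hc : cn ((m : ℤ) • qq) = (m : ℤ) • cn qq := by
        ext j
        refine Fin.cases rfl (fun j => rfl) j
      change ‖pr p (cn ((m : ℤ) • qq)) (Yc p y)‖ ≤ ‖cn ((m : ℤ) • qq)‖ ^ (-v)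
      rw [hc, pr_smul, hpr, mul_zero, norm_zero]
      positivity
  have hev : ∀ᶠ t : ℕ in atTop, ∀ qq ∈ S, cn qq ≠ 0 → 1 < (p : ℝ) ^ t * ‖pr p (cn qq) (Yc p y)‖ := by
    rw [eventually_all_finite hfin]
    intro qq hqq
    by_cases hq0 : cn qq = 0
    · exact Eventually.of_forall fun t h => absurd hq0 h
    · have hpos : 0 < ‖pr p (cn qq) (Yc p y)‖ := norm_pos_iff.2 (hne qq hqq hq0)
      have := ((tendsto_pow_atTop_atTop_of_one_lt (one_lt_p_real p)).atTop_mul_const hpos).eventually_gt_atTop 1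
      exact this.mono fun t ht _ => ht
  apply hcon
  filter_upwards [hev] with t ht q hq0 hq
  by_contra hlt
  push Not at hlt
  obtain ⟨qq, rfl⟩ := cn_surj q
  have hmem : qq ∈ S := by
    have hpos : 0 < ‖cn qq‖ := lt_of_lt_of_le one_pos (one_le_norm_int _ hq0)
    have h1 : ‖cn qq‖ ^ v ≤ (p : ℝ) ^ t := by
      calc ‖cn qq‖ ^ v = (‖cn qq‖ ^ (n + 1)) ^ (1 + δ) := by
            rw [hv, Real.rpow_mul hpos.le, ← Real.rpow_natCast]; push_cast; rfl
        _ ≤ ((p : ℝ) ^ ((t : ℝ) * (1 - δ))) ^ (1 + δ) := by gcongr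
        _ = (p : ℝ) ^ ((t : ℝ) * (1 - δ) * (1 + δ)) := (Real.rpow_mul hpp.le _ _).symm
        _ ≤ (p : ℝ) ^ (t : ℝ) := by
          apply Real.rpow_le_rpow_of_exponent_le (one_lt_p_real p).le
          nlinarith [(Nat.cast_nonneg t : (0 : ℝ) ≤ t), mul_nonneg (Nat.cast_nonneg t : (0 : ℝ) ≤ t) (sq_nonneg δ)]
        _ = _ := Real.rpow_natCast _ _
    change ‖pr p (cn qq) (Yc p y)‖ ≤ ‖cn qq‖ ^ (-v)
    have h2 : 0 < ‖cn qq‖ ^ v := Real.rpow_pos_of_pos hpos _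
    rw [Real.rpow_neg hpos.le, ← mul_one (_⁻¹), le_inv_mul_iff₀ h2]
    refine le_trans ?_ hq
    gcongr
  have := ht qq hmem hq0
  linarith

lemma not_VWA_of_NV {n : ℕ} (y : Fin n → ℚ_[p]) (h : NV p (Yc p y)) : ¬ IsVWA p y := by
  rw [isVWA_iff]
  rintro ⟨v, hv, hinf⟩
  have hpp := p_pos_real p
  have hp1 := one_lt_p_real p
  have hn0 : (0 : ℝ) ≤ n := Nat.cast_nonneg n
  have hv0 : 0 < v := by linarith
  -- choose δ
  obtain ⟨i, hi⟩ := exists_nat_one_div_lt (show (0 : ℝ) < 1 - ((n : ℝ) + 1) / v by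
    rw [sub_pos, div_lt_one hv0]; exact hv)
  set δ : ℝ := 1 / ((i : ℝ) + 1) with hδ
  set η := (1 - δ) * v - (n + 1) with hη
  have hη0 : 0 < η := by
    have : ((n : ℝ) + 1) / v < 1 - δ := by linarith
    rw [div_lt_iff₀ hv0] at this
    linarith
  obtain ⟨T, hT⟩ := eventually_atTop.1 (h i)
  obtain ⟨T1, hT1⟩ := exists_nat_gt (((n : ℝ) + 1) / η)
  set T' := T + T1 + 1 with hT'
  have hfin : {qq : ℤ × (Fin n → ℤ) | ‖cn qq‖ ≤ (p : ℝ) ^ T'}.Finite := by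
    have h1 : (closedBall (0 : Fin (n + 1) → ℤ) ((p : ℝ) ^ T')).Finite :=
      (isCompact_closedBall _ _).finite_of_discrete
    refine (h1.preimage (cn_inj.injOn)).subset ?_
    intro qq hqq
    simpa using hqq
  obtain ⟨qq, hqq, hbig⟩ := hinf.exists_notMem_finite hfin
  simp only [Set.mem_ofPred_eq, not_le] at hqq hbig
  have h1H : 1 ≤ ‖cn qq‖ := (one_le_pow₀ hp1.le).trans hbig.le
  have hH0 : 0 < ‖cn qq‖ := by linarith
  have hq0 : cn qq ≠ 0 := norm_pos_iff.1 hH0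
  have hHv : ‖cn qq‖ ≤ ‖cn qq‖ ^ v := by
    conv_lhs => rw [← Real.rpow_one ‖cn qq‖]
    exact Real.rpow_le_rpow_of_exponent_le h1H (by linarith)
  obtain ⟨t, ht1, ht2⟩ := exists_nat_pow_near (h1H.trans hHv) hp1
  have htT : T' < t + 1 := by
    have : (p : ℝ) ^ T' < (p : ℝ) ^ (t + 1) := by linarith
    exact (pow_lt_pow_iff_right₀ hp1).1 this
  have hdio := hT t (by omega) (cn qq) hq0 (by
    calc _ ≤ ‖cn qq‖ ^ v * ‖cn qq‖ ^ (-v) := by gcongr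
      _ = 1 := by rw [← Real.rpow_add hH0]; simp)
  have h3 : (p : ℝ) ^ ((t : ℝ) * (1 - δ) * v) < (p : ℝ) ^ (((t : ℝ) + 1) * (n + 1)) := by
    calc (p : ℝ) ^ ((t : ℝ) * (1 - δ) * v) = ((p : ℝ) ^ ((t : ℝ) * (1 - δ))) ^ v := by
          rw [Real.rpow_mul hpp.le]
      _ ≤ (‖cn qq‖ ^ (n + 1)) ^ v := by gcongr
      _ = (‖cn qq‖ ^ v) ^ (n + 1) := by
          rw [← Real.rpow_natCast, ← Real.rpow_natCast, ← Real.rpow_mul hH0.le, ← Real.rpow_mul hH0.le, mul_comm]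
      _ < ((p : ℝ) ^ (t + 1)) ^ (n + 1) := by
          apply pow_lt_pow_left₀ ht2 (by positivity) (by omega)
      _ = _ := by
          rw [← pow_mul, ← Real.rpow_natCast]; push_cast; rfl
  have h4 := (Real.rpow_lt_rpow_left_iff hp1).1 h3
  have h5 : (T1 : ℝ) ≤ t := by exact_mod_cast (by omega : T1 ≤ t)
  have h6 : ((n : ℝ) + 1) < t * η := by
    rw [div_lt_iff₀ hη0] at hT1
    nlinarith
  nlinarith

end dioph

end


section

section oneDim
open Filter

lemma Kc_lin (l : ℕ) : ∃ c : ℝ≥0∞, c ≠ ∞ ∧ ∀ κ, Kc p κ l = c * κ := by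
  induction l with
  | zero => exact ⟨0, by simp, fun κ => by simp [Kc]⟩
  | succ l ih =>
    obtain ⟨c, hc, h⟩ := ih
    refine ⟨p * (c + 1), ENNReal.mul_ne_top (by simp) (by simp [hc]), fun κ => ?_⟩
    rw [Kc, h]; ring

lemma pow_div_bound (D : ℕ) (hD : 0 < D) (t : ℕ) :
    ((p : ℝ≥0∞) ^ (t / D))⁻¹ ≤ ENNReal.ofReal (p * ((p : ℝ) ^ (-(1 / (D : ℝ)))) ^ t) := by
  have hpp := p_pos_real p
  have hD' : (0 : ℝ) < D := by exact_mod_cast hD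
  have h1 : ((p : ℝ≥0∞) ^ (t / D))⁻¹ = ENNReal.ofReal (((p : ℝ) ^ (t / D))⁻¹) := by
    rw [ENNReal.ofReal_inv_of_pos (by positivity), ENNReal.ofReal_pow hpp.le, ENNReal.ofReal_natCast]
  rw [h1]
  apply ENNReal.ofReal_le_ofReal
  rw [inv_le_iff_one_le_mul₀ (by positivity), ← Real.rpow_natCast, ← Real.rpow_natCast,
    ← Real.rpow_mul hpp.le]
  have h2 : (p : ℝ) * (p : ℝ) ^ (-(1 / (D : ℝ)) * (t : ℝ)) * (p : ℝ) ^ (((t / D : ℕ)) : ℝ)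
      = (p : ℝ) ^ (1 + -(1 / (D : ℝ)) * (t : ℝ) + ((t / D : ℕ) : ℝ)) := by
    rw [Real.rpow_add hpp, Real.rpow_add hpp, Real.rpow_one]
  rw [h2]
  apply Real.one_le_rpow (one_lt_p_real p).le
  have h3 : (t : ℝ) ≤ D * (((t / D : ℕ) : ℝ) + 1) := by
    exact_mod_cast (Nat.lt_mul_div_succ t hD).le
  have h4 : (t : ℝ) / D ≤ ((t / D : ℕ) : ℝ) + 1 := by rwa [div_le_iff₀' hD']
  have h5 : -(1 / (D : ℝ)) * (t : ℝ) = - ((t : ℝ) / D) := by ring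
  rw [h5]; linarith

lemma oneD_step {k : ℕ} (hk : 0 < k) (μ : Measure ℚ_[p]) [μ.IsAddHaarMeasure]
    (Fm : ℚ_[p] → Fin k → ℚ_[p]) (N : ℕ)
    (hN : ∀ c : Fin k → ℚ_[p], ∃ N' ≤ N, GoodF p N' (fun s => ∑ i, c i * Fm s i))
    (hF : ContinuousOn Fm (closedBall 0 1)) (δ : ℝ) (hδ : 0 < δ) (D : ℕ) (hD : 0 < D)
    (hDN : 3 * N * k ≤ D * δ) (h0 : NVd p (δ / 3) (Fm 0)) :
    ∀ᶠ t : ℕ in atTop, μ {x ∈ bl p 0 0 | ∃ q : Fin k → ℤ, q ≠ 0 ∧ (p : ℝ) ^ t * ‖pr p q (Fm x)‖ ≤ 1 ∧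
      ‖q‖ ^ k < (p : ℝ) ^ ((t : ℝ) * (1 - δ))} ≤
        Kc p (N * ((p : ℝ≥0∞) ^ (t / D))⁻¹) k * μ (bl p 0 0) := by
  have hpp := p_pos_real p
  have hp1 := one_lt_p_real p
  have hk' : (0 : ℝ) < k := by exact_mod_cast hk
  have hD' : (0 : ℝ) < D := by exact_mod_cast hD
  have hbig : ∀ᶠ t : ℕ in atTop, (k : ℝ) ^ 2 ≤ (p : ℝ) ^ ((t : ℝ) * δ / (3 * k)) := by
    have hb : 1 < (p : ℝ) ^ (δ / (3 * k)) := Real.one_lt_rpow hp1 (by positivity)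
    filter_upwards [(tendsto_pow_atTop_atTop_of_one_lt hb).eventually_ge_atTop ((k : ℝ) ^ 2)] with t ht
    have he : (p : ℝ) ^ ((t : ℝ) * δ / (3 * k)) = ((p : ℝ) ^ (δ / (3 * k))) ^ t := by
      rw [← Real.rpow_natCast, ← Real.rpow_mul hpp.le]
      congr 1
      ring
    rw [he]; exact ht
  filter_upwards [h0, hbig] with t ht hbt
  set A := (p : ℝ) ^ ((t : ℝ) * (1 - δ) / k) with hA
  set B := (p : ℝ) ^ ((t : ℝ) * (1 - δ / 3) / k) with hB
  have hA0 : 0 < A := by positivity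
  have hB0 : 0 < B := by positivity
  have hpowk : ∀ z : ℝ, ((p : ℝ) ^ (z / k)) ^ k = (p : ℝ) ^ z := by
    intro z
    rw [← Real.rpow_natCast, ← Real.rpow_mul hpp.le, div_mul_cancel₀ _ hk'.ne']
  have hsN : (p : ℝ) ^ ((t / D) * N) ≤ (p : ℝ) ^ ((t : ℝ) * δ / (3 * k)) := by
    rw [← Real.rpow_natCast]
    apply Real.rpow_le_rpow_of_exponent_le hp1.le
    push_cast
    have h1 : ((t / D : ℕ) : ℝ) ≤ t / D := Nat.cast_div_le
    calc ((t / D : ℕ) : ℝ) * N ≤ (t / D) * N := by gcongr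
      _ ≤ _ := by
        rw [div_mul_eq_mul_div, div_le_div_iff₀ hD' (by positivity)]
        have := mul_le_mul_of_nonneg_left hDN (Nat.cast_nonneg t : (0 : ℝ) ≤ t)
        linarith
  have hAB : (k : ℝ) ^ 2 * A * (p : ℝ) ^ ((t / D) * N) ≤ B := by
    calc (k : ℝ) ^ 2 * A * (p : ℝ) ^ ((t / D) * N)
        ≤ (p : ℝ) ^ ((t : ℝ) * δ / (3 * k)) * A * (p : ℝ) ^ ((t : ℝ) * δ / (3 * k)) := by gcongr
      _ = B := by
        rw [hA, hB, ← Real.rpow_add hpp, ← Real.rpow_add hpp]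
        congr 1
        field_simp
        ring
  have hQ := thmQ p μ Fm N hN hF t (t / D) (B / k) (by positivity) (by
    intro q hq0 hq
    rw [mul_div_cancel₀ _ hk'.ne']
    have := ht q hq0 hq
    rw [← hpowk] at this
    exact le_of_pow_le_pow_left₀ hk.ne' (norm_nonneg _) this)
  refine le_trans (measure_mono ?_) hQ
  rintro x ⟨hx, q, hq0, hq, hql⟩
  refine ⟨hx, q, hq0, hq, ?_⟩
  rw [← hpowk] at hql
  have hqA : ‖q‖ < A := lt_of_pow_lt_pow_left₀ k hA0.le hql
  calc (k : ℝ) * ‖q‖ < k * A := by gcongr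
    _ ≤ _ := by
      rw [inv_mul_eq_div, div_div, le_div_iff₀ (by positivity)]
      linarith

theorem oneD {k : ℕ} (hk : 0 < k) (μ : Measure ℚ_[p]) [μ.IsAddHaarMeasure]
    (Fm : ℚ_[p] → Fin k → ℚ_[p]) (N : ℕ)
    (hN : ∀ c : Fin k → ℚ_[p], ∃ N' ≤ N, GoodF p N' (fun s => ∑ i, c i * Fm s i))
    (hF : ContinuousOn Fm (closedBall 0 1)) (h0 : NV p (Fm 0)) :
    μ {x ∈ bl p 0 0 | ¬ NV p (Fm x)} = 0 := by
  have hpp := p_pos_real p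
  have hp1 := one_lt_p_real p
  have hsub : {x ∈ bl p 0 0 | ¬ NV p (Fm x)} ⊆ ⋃ i : ℕ, {x ∈ bl p 0 0 | ¬ NVd p (1 / ((i : ℝ) + 1)) (Fm x)} := by
    rintro x ⟨hx, hn⟩
    unfold NV at hn
    push Not at hn
    obtain ⟨i, hi⟩ := hn
    exact Set.mem_iUnion.2 ⟨i, hx, hi⟩
  refine measure_mono_null hsub (measure_iUnion_null fun i => ?_)
  set δ : ℝ := 1 / ((i : ℝ) + 1) with hδ
  have hi0 : (0 : ℝ) < (i : ℝ) + 1 := by positivity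
  have hδ0 : 0 < δ := by positivity
  set D := 3 * N * k * (i + 1) + 1 with hDd
  have hD : 0 < D := by omega
  have hDN : (3 : ℝ) * N * k ≤ D * δ := by
    rw [hδ, mul_one_div, le_div_iff₀ hi0, hDd]
    push_cast
    linarith
  have h3 : NVd p (δ / 3) (Fm 0) := by
    have := h0 (3 * i + 2)
    have he : 1 / (((3 * i + 2 : ℕ) : ℝ) + 1) = δ / 3 := by
      rw [hδ]; push_cast; field_simp; ring
    rwa [he] at this
  obtain ⟨T, hT⟩ := eventually_atTop.1 (oneD_step p hk μ Fm N hN hF δ hδ0 D hD hDN h3)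
  set E : ℕ → Set ℚ_[p] := fun t => {x ∈ bl p 0 0 | ∃ q : Fin k → ℤ, q ≠ 0 ∧ (p : ℝ) ^ t * ‖pr p q (Fm x)‖ ≤ 1 ∧
      ‖q‖ ^ k < (p : ℝ) ^ ((t : ℝ) * (1 - δ))} with hE
  obtain ⟨c, hc, hKc⟩ := Kc_lin p k
  set r := (p : ℝ) ^ (-(1 / (D : ℝ))) with hr
  have hr1 : r < 1 := Real.rpow_lt_one_of_one_lt_of_neg hp1 (by
    have : (0 : ℝ) < D := by exact_mod_cast hD
    have : 0 < 1 / (D : ℝ) := by positivity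
    linarith)
  have hsum : Summable fun t : ℕ => (p : ℝ) * r ^ t :=
    (summable_geometric_of_lt_one (by positivity) hr1).mul_left _
  have hle : ∀ t, μ {x | x ∈ E t ∧ T ≤ t} ≤ (c * N * μ (bl p 0 0)) * ENNReal.ofReal (p * r ^ t) := by
    intro t
    by_cases ht : T ≤ t
    · refine (measure_mono (fun x hx => hx.1)).trans ((hT t ht).trans ?_)
      rw [hKc]
      calc c * (N * ((p : ℝ≥0∞) ^ (t / D))⁻¹) * μ (bl p 0 0)
          = (c * N * μ (bl p 0 0)) * ((p : ℝ≥0∞) ^ (t / D))⁻¹ := by ring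
        _ ≤ _ := by gcongr; exact pow_div_bound p D hD t
    · simp [ht]
  have hfin : μ (bl p 0 0) ≠ ∞ := (isCompact_closedBall _ _).measure_lt_top.ne
  have hbc := measure_setOfPred_frequently_eq_zero (μ := μ) (p := fun t x => x ∈ E t ∧ T ≤ t) (by
    refine ne_top_of_le_ne_top ?_ (ENNReal.tsum_le_tsum hle)
    rw [ENNReal.tsum_mul_left]
    exact ENNReal.mul_ne_top (ENNReal.mul_ne_top (ENNReal.mul_ne_top hc (by simp)) hfin)
      hsum.tsum_ofReal_ne_top)
  refine measure_mono_null ?_ hbc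
  rintro x ⟨hx, hn⟩
  unfold NVd at hn
  rw [not_eventually] at hn
  refine (hn.and_eventually (eventually_ge_atTop T)).mono ?_
  rintro t ⟨h1, h2⟩
  push Not at h1
  obtain ⟨q, hq0, hq, hql⟩ := h1
  exact ⟨⟨hx, q, hq0, hq, hql⟩, h2⟩

end oneDim

end


section

section final
open Filter Topology

lemma not_VWA_iff {n : ℕ} (y : Fin n → ℚ_[p]) : ¬ IsVWA p y ↔ NV p (Yc p y) :=
  ⟨NV_of_not_VWA p y, not_VWA_of_NV p y⟩

lemma meas_VWA (n : ℕ) : MeasurableSet {y : Fin n → ℚ_[p] | IsVWA p y} := by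
  have h : {y : Fin n → ℚ_[p] | IsVWA p y} = (⋂ i : ℕ, ⋃ T : ℕ, ⋂ t : ℕ, ⋂ (_ : T ≤ t),
      ⋂ q : Fin (n + 1) → ℤ, ⋂ (_ : q ≠ 0),
      {y : Fin n → ℚ_[p] | (p : ℝ) ^ t * ‖pr p q (Yc p y)‖ ≤ 1 →
        (p : ℝ) ^ ((t : ℝ) * (1 - 1 / ((i : ℝ) + 1))) ≤ ‖q‖ ^ (n + 1)})ᶜ := by
    ext y
    rw [Set.mem_compl_iff, Set.mem_ofPred_eq, ← not_iff_not, not_not, not_VWA_iff]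
    unfold NV NVd
    simp only [eventually_atTop, Set.mem_iInter, Set.mem_iUnion, Set.mem_ofPred_eq]
  rw [h]
  refine MeasurableSet.compl (MeasurableSet.iInter fun i => MeasurableSet.iUnion fun T =>
    MeasurableSet.iInter fun t => MeasurableSet.iInter fun _ => MeasurableSet.iInter fun q =>
    MeasurableSet.iInter fun _ => ?_)
  by_cases hc : (p : ℝ) ^ ((t : ℝ) * (1 - 1 / ((i : ℝ) + 1))) ≤ ‖q‖ ^ (n + 1)
  · convert MeasurableSet.univ using 1
    ext y
    simp only [Set.mem_ofPred_eq, Set.mem_univ, iff_true]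
    exact fun _ => hc
  · have hcont : Continuous fun y : Fin n → ℚ_[p] => (p : ℝ) ^ t * ‖pr p q (Yc p y)‖ := by
      obtain ⟨qq, rfl⟩ := cn_surj q
      simp_rw [pr_cn]
      fun_prop
    have : IsClosed {y : Fin n → ℚ_[p] | (p : ℝ) ^ t * ‖pr p q (Yc p y)‖ ≤ 1} :=
      isClosed_le hcont continuous_const
    convert this.measurableSet.compl using 1
    ext y
    simp only [Set.mem_ofPred_eq, Set.mem_compl_iff]
    exact ⟨fun h h' => hc (h h'), fun h h' => absurd h' h⟩

lemma line_null {d n : ℕ} (ν : Measure ℚ_[p]) [ν.IsAddHaarMeasure]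
    (f : (Fin d → ℚ_[p]) → (Fin n → ℚ_[p])) (x₀ : Fin d → ℚ_[p])
    (P : FormalMultilinearSeries ℚ_[p] (Fin d → ℚ_[p]) (Fin n → ℚ_[p])) (R : ℝ≥0∞)
    (hP : HasFPowerSeriesOnBall f P x₀ R) (h0 : ¬ IsVWA p (f x₀))
    (v : Fin d → ℚ_[p]) (hv : ENNReal.ofReal ‖v‖ < R) :
    ν {s ∈ bl p 0 0 | IsVWA p (f (x₀ + s • v))} = 0 := by
  have hmem : ∀ s : ℚ_[p], ‖s‖ ≤ 1 → s • v ∈ Metric.eball (0 : Fin d → ℚ_[p]) R := by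
    intro s hs
    rw [Metric.mem_eball, edist_zero_right, ← ofReal_norm]
    refine lt_of_le_of_lt (ENNReal.ofReal_le_ofReal ?_) hv
    rw [norm_smul]
    exact mul_le_of_le_one_left (norm_nonneg _) hs
  let a : Fin n → ℕ → ℚ_[p] := fun i j => P j (fun _ => v) i
  have hsum : ∀ s : ℚ_[p], ‖s‖ ≤ 1 → ∀ i, HasSum (fun j => a i j * s ^ j) (f (x₀ + s • v) i) := by
    intro s hs i
    have h1 := hP.hasSum (hmem s hs)
    have h2 := (Pi.hasSum.1 h1) i
    convert h2 using 2 with j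
    rw [ContinuousMultilinearMap.map_smul_univ]
    simp [a, mul_comm]
  have ha : ∀ i, Tendsto (a i) atTop (𝓝 0) := by
    intro i
    have := (hsum 1 (by simp) i).summable.tendsto_atTop_zero
    simpa using this
  let a' : Fin (n + 1) → ℕ → ℚ_[p] := Fin.cons (Pi.single 0 1) a
  have ha' : ∀ i, Tendsto (a' i) atTop (𝓝 0) := by
    intro i
    refine Fin.cases ?_ (fun i => ?_) i
    · apply tendsto_const_nhds.congr'
      filter_upwards [eventually_gt_atTop 0] with j hj
      simp [a', Pi.single_apply, hj.ne']
    · exact ha i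
  obtain ⟨N, hN⟩ := unif_good p (n + 1) a' ha'
  let Fm : ℚ_[p] → Fin (n + 1) → ℚ_[p] := fun s i => ev p (a' i) s
  have hFm : ∀ s : ℚ_[p], ‖s‖ ≤ 1 → Fm s = Yc p (f (x₀ + s • v)) := by
    intro s hs
    ext i
    refine Fin.cases ?_ (fun i => ?_) i
    · change ∑' j, (Pi.single 0 1 : ℕ → ℚ_[p]) j * s ^ j = 1
      rw [tsum_eq_single 0]
      · simp
      · intro j hj; simp [hj]
    · exact (hsum s hs i).tsum_eq
  have hF : ContinuousOn Fm (closedBall 0 1) := by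
    rw [continuousOn_pi]
    exact fun i => ev_continuousOn p (ha' i)
  have h00 : NV p (Fm 0) := by
    rw [hFm 0 (by simp), zero_smul, add_zero]
    exact NV_of_not_VWA p _ h0
  refine measure_mono_null ?_ (oneD p (Nat.succ_pos n) ν Fm N hN hF h00)
  rintro s ⟨hs, hV⟩
  refine ⟨hs, fun hNV => ?_⟩
  have hs1 : ‖s‖ ≤ 1 := unit_of_mem p (bl_mem_self p 0 0) hs
  rw [hFm s hs1] at hNV
  exact not_VWA_of_NV p _ hNV hV

lemma null_smul {d : ℕ} (μ : Measure (Fin d → ℚ_[p])) [μ.IsAddHaarMeasure] (s : ℚ_[p]) (hs : s ≠ 0)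
    (x₀ : Fin d → ℚ_[p]) (A : Set (Fin d → ℚ_[p])) (hA : μ A = 0) :
    μ ((fun v => x₀ + s • v) ⁻¹' A) = 0 := by
  have h1 : μ ((fun v => x₀ + v) ⁻¹' A) = 0 := by rw [measure_preimage_add, hA]
  let e : (Fin d → ℚ_[p]) ≃+ (Fin d → ℚ_[p]) :=
    DistribMulAction.toAddEquiv (Fin d → ℚ_[p]) (Units.mk0 s hs)
  have he : Continuous e := by
    change Continuous fun v : Fin d → ℚ_[p] => s • v
    fun_prop
  have he' : Continuous e.symm := by
    change Continuous fun v : Fin d → ℚ_[p] => ((Units.mk0 s hs)⁻¹ : ℚ_[p]ˣ) • v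
    exact continuous_const_smul _
  have h2 : (μ.map e).IsAddHaarMeasure := AddEquiv.isAddHaarMeasure_map μ e he he'
  have h4 : (μ.map e) ((fun v => x₀ + v) ⁻¹' A) = 0 :=
    Measure.absolutelyContinuous_isAddHaarMeasure (μ.map e) μ h1
  have h5 := Measure.le_map_apply (μ := μ) he.aemeasurable ((fun v => x₀ + v) ⁻¹' A)
  rw [h4] at h5
  exact le_antisymm h5 bot_le

lemma main_pos {d n : ℕ} (μ : Measure (Fin d → ℚ_[p])) [μ.IsAddHaarMeasure]
    (U : Set (Fin d → ℚ_[p])) (hU : IsOpen U)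
    (f : (Fin d → ℚ_[p]) → (Fin n → ℚ_[p])) (hf : AnalyticOnNhd ℚ_[p] f U)
    (x₀ : Fin d → ℚ_[p]) (hx₀ : x₀ ∈ U) (h0 : ¬ IsVWA p (f x₀)) :
    0 < μ {x ∈ U | ¬ IsVWA p (f x)} := by
  obtain ⟨P, R, hP⟩ := hf x₀ hx₀
  obtain ⟨r₁, hr₁, hr₁U⟩ := Metric.isOpen_iff.1 hU x₀ hx₀
  obtain ⟨r₂, hr₂, hr₂R⟩ := ENNReal.lt_iff_exists_nnreal_btwn.1 hP.r_pos
  have hr₂' : 0 < (r₂ : ℝ) := by exact_mod_cast hr₂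
  obtain ⟨r, hr, hrr₁, hrr₂⟩ : ∃ r : ℝ, 0 < r ∧ r < r₁ ∧ r ≤ r₂ :=
    ⟨min (r₁ / 2) r₂, by positivity, lt_of_le_of_lt (min_le_left _ _) (by linarith),
      min_le_right _ _⟩
  have hsm : ∀ v : Fin d → ℚ_[p], ‖v‖ ≤ r → ∀ s : ℚ_[p], ‖s‖ ≤ 1 → x₀ + s • v ∈ U := by
    intro v hv s hs
    apply hr₁U
    rw [mem_ball, dist_eq_norm, add_sub_cancel_left, norm_smul]
    exact lt_of_le_of_lt ((mul_le_of_le_one_left (norm_nonneg _) hs).trans hv) hrr₁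
  let ν : Measure ℚ_[p] := Measure.addHaar
  let C : Set ((Fin d → ℚ_[p]) × ℚ_[p]) := {z | ‖z.1‖ ≤ r ∧ ‖z.2‖ ≤ 1}
  have hC : IsClosed C :=
    IsClosed.inter (s₁ := {z : (Fin d → ℚ_[p]) × ℚ_[p] | ‖z.1‖ ≤ r})
      (s₂ := {z : (Fin d → ℚ_[p]) × ℚ_[p] | ‖z.2‖ ≤ 1})
      (isClosed_le continuous_fst.norm continuous_const)
      (isClosed_le continuous_snd.norm continuous_const)
  let g : (Fin d → ℚ_[p]) × ℚ_[p] → (Fin n → ℚ_[p]) := fun z => f (x₀ + z.2 • z.1)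
  have hg : ContinuousOn g C :=
    hf.continuousOn.comp (f := fun z : (Fin d → ℚ_[p]) × ℚ_[p] => x₀ + z.2 • z.1)
      (by fun_prop) (fun z hz => hsm z.1 hz.1 z.2 hz.2)
  let Z : Set ((Fin d → ℚ_[p]) × ℚ_[p]) := {z | z ∈ C ∧ IsVWA p (g z)}
  have hZm : MeasurableSet Z := by
    have h1 : Measurable (C.domRestrict g) := hg.domRestrict.measurable
    have h2 := hC.measurableSet.subtype_image (h1 (meas_VWA p n))
    convert h2 using 1
    ext z
    constructor
    · rintro ⟨hz, hz'⟩
      exact ⟨⟨z, hz⟩, hz', rfl⟩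
    · rintro ⟨w, hw, rfl⟩
      exact ⟨w.2, hw⟩
  have hZ0 : (μ.prod ν) Z = 0 := by
    rw [Measure.measure_prod_null hZm]
    refine Filter.Eventually.of_forall fun v => ?_
    by_cases hv : ‖v‖ ≤ r
    · refine measure_mono_null ?_ (line_null p ν f x₀ P R hP h0 v ?_)
      · rintro s ⟨⟨_, hs⟩, hV⟩
        refine ⟨?_, hV⟩
        simpa [bl] using hs
      · refine lt_of_le_of_lt ?_ hr₂R
        rw [← ENNReal.ofReal_coe_nnreal]
        exact ENNReal.ofReal_le_ofReal (hv.trans hrr₂)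
    · refine measure_mono_null ?_ (measure_empty (μ := ν))
      rintro s ⟨⟨hs, _⟩, _⟩
      exact hv hs
  have hZ1 : (ν.prod μ) (Prod.swap ⁻¹' Z) = 0 := by
    rw [← Measure.prod_swap, Measure.map_apply measurable_swap (measurable_swap hZm)]
    exact hZ0
  have hae := Measure.measure_ae_null_of_prod_null hZ1
  obtain ⟨s, hs1, hs2⟩ : ∃ s ∈ ball (1 : ℚ_[p]) 1,
      μ (Prod.mk s ⁻¹' (Prod.swap ⁻¹' Z)) = 0 := by
    by_contra! hcon
    have : ν (ball (1 : ℚ_[p]) 1) = 0 := by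
      refine measure_mono_null ?_ (ae_iff.1 hae)
      intro s hs
      exact hcon s hs
    exact (measure_ball_pos ν (1 : ℚ_[p]) one_pos).ne' this
  have hs0 : s ≠ 0 := by
    rintro rfl
    simp at hs1
  have hsn : ‖s‖ ≤ 1 := by
    have h1 : ‖s - 1‖ ≤ 1 := by
      rw [← dist_eq_norm]; exact (mem_ball.1 hs1).le
    have h2 := Padic.nonarchimedean (s - 1) 1
    rw [sub_add_cancel] at h2
    exact h2.trans (max_le h1 (by simp))
  rw [pos_iff_ne_zero]
  intro hnull
  have h3 := null_smul p μ s hs0 x₀ _ hnull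
  have h4 := measure_union_null hs2 h3
  have h5 : μ (ball (0 : Fin d → ℚ_[p]) r) = 0 := by
    refine measure_mono_null ?_ h4
    intro v hv
    have hv' : ‖v‖ ≤ r := by simpa using (mem_ball.1 hv).le
    by_cases hV : IsVWA p (f (x₀ + s • v))
    · exact Or.inl ⟨⟨hv', hsn⟩, hV⟩
    · exact Or.inr ⟨hsm v hv' s hsn, hV⟩
  exact (measure_ball_pos μ (0 : Fin d → ℚ_[p]) hr).ne' h5

end final

end

/-- If `M ⊆ ℚ_p^n` is an analytic submanifold and some `y₀ ∈ M` is not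
very well approximable, then the set of not very well approximable points of `M` has
positive measure w.r.t. the smooth measure class on `M`. -/
theorem statement1 (p : ℕ) [Fact p.Prime] (n d : ℕ) (hn : 1 ≤ n)
    (M : Set (Fin n → ℚ_[p])) (hM : IsAnalyticSubmanifold p d n M)
    (y₀ : Fin n → ℚ_[p]) (hy₀ : y₀ ∈ M) (hw : ¬ IsVWA p y₀) :
    ∃ (U : Set (Fin d → ℚ_[p])) (f : (Fin d → ℚ_[p]) → (Fin n → ℚ_[p])),
      IsChart p d n M U f ∧
      ∀ (μ : Measure (Fin d → ℚ_[p])), μ.IsAddHaarMeasure →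
        0 < μ {x ∈ U | ¬ IsVWA p (f x)} := by
  obtain ⟨U, f, hc, x₀, hx₀, rfl⟩ := hM.2 y₀ hy₀
  exact ⟨U, f, hc, fun μ _ => main_pos p μ U hc.1 f hc.2.1 x₀ hx₀ hw⟩

end PadicDioph
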